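/- Any two proper gradient maps f, g : ℝ² → ℝ² with Brouwer degree deg f = deg g = 0 are proper gradient homotopic; that is, the set of proper gradient homotopy classes of proper gradient maps of degree 0 on ℝ² is a singleton. -/

import Mathlib

open Set Metric Filter

noncomputable section

/-- Euclidean space `ℝⁿ`. -/
abbrev Euc (n : ℕ) := EuclideanSpace ℝ (Fin n)

/-- A map `f : ℝⁿ → ℝⁿ` is gradient if it is the gradient of a `C¹` function `φ : ℝⁿ → ℝ`. -/
def IsGradient {n : ℕ} (f : Euc n → Euc n) : Prop :=
  ∃ φ : Euc n → ℝ, ContDiff ℝ 1 φ ∧ ∀ x, gradient φ x = f x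

/-- A map is proper if preimages of compact sets are compact (our maps are continuous anyway). -/
def IsProper {n : ℕ} (f : Euc n → Euc n) : Prop :=
  ∀ K : Set (Euc n), IsCompact K → IsCompact (f ⁻¹' K)

/-- `h : [0,1] × ℝⁿ → ℝⁿ` is a gradient homotopy: it is continuous, each `h t` is a
gradient map, and the zero set `h⁻¹(0)` (within `[0,1] × ℝⁿ`) is compact. -/
def IsGradientHomotopy {n : ℕ} (h : ℝ → Euc n → Euc n) : Prop :=
  ContinuousOn (fun p : ℝ × Euc n => h p.1 p.2) (Icc 0 1 ×ˢ univ) ∧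
  (∀ t ∈ Icc (0:ℝ) 1, IsGradient (h t)) ∧
  IsCompact {p : ℝ × Euc n | p.1 ∈ Icc (0:ℝ) 1 ∧ h p.1 p.2 = 0}

/-- Two maps are gradient homotopic if some gradient homotopy connects them. -/
def GradientHomotopic {n : ℕ} (f g : Euc n → Euc n) : Prop :=
  ∃ h : ℝ → Euc n → Euc n, IsGradientHomotopy h ∧ h 0 = f ∧ h 1 = g

/-- `h : [0,1] × ℝⁿ → ℝⁿ` is a proper gradient homotopy: it is continuous, each `h t` is a
gradient map, and `h` is proper as a map on `[0,1] × ℝⁿ`. -/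
def IsProperGradientHomotopy {n : ℕ} (h : ℝ → Euc n → Euc n) : Prop :=
  ContinuousOn (fun p : ℝ × Euc n => h p.1 p.2) (Icc 0 1 ×ˢ univ) ∧
  (∀ t ∈ Icc (0:ℝ) 1, IsGradient (h t)) ∧
  (∀ K : Set (Euc n), IsCompact K →
    IsCompact {p : ℝ × Euc n | p.1 ∈ Icc (0:ℝ) 1 ∧ h p.1 p.2 ∈ K})

/-- Two maps are proper gradient homotopic if some proper gradient homotopy connects them. -/
def ProperGradientHomotopic {n : ℕ} (f g : Euc n → Euc n) : Prop :=
  ∃ h : ℝ → Euc n → Euc n, IsProperGradientHomotopy h ∧ h 0 = f ∧ h 1 = g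
/-- A Brouwer degree theory on `ℝⁿ`: an integer-valued function `deg f Ω`, defined for
continuous maps nonvanishing on `∂Ω`, satisfying the classical axioms of normalization,
additivity and homotopy invariance, which determine it uniquely. -/
structure DegreeTheory (n : ℕ) where
  deg : (Euc n → Euc n) → Set (Euc n) → ℤ
  normalized : ∀ Ω : Set (Euc n), IsOpen Ω → Bornology.IsBounded Ω → (0 : Euc n) ∈ Ω →
    deg id Ω = 1
  additive : ∀ (f : Euc n → Euc n) (Ω Ω₁ Ω₂ : Set (Euc n)),
    IsOpen Ω → Bornology.IsBounded Ω → IsOpen Ω₁ → IsOpen Ω₂ →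
    Ω₁ ⊆ Ω → Ω₂ ⊆ Ω → Disjoint Ω₁ Ω₂ →
    ContinuousOn f (closure Ω) →
    (∀ x ∈ closure Ω \ (Ω₁ ∪ Ω₂), f x ≠ 0) →
    deg f Ω = deg f Ω₁ + deg f Ω₂
  homotopyInv : ∀ (h : ℝ → Euc n → Euc n) (Ω : Set (Euc n)),
    IsOpen Ω → Bornology.IsBounded Ω →
    ContinuousOn (fun p : ℝ × Euc n => h p.1 p.2) (Icc 0 1 ×ˢ closure Ω) →
    (∀ t ∈ Icc (0:ℝ) 1, ∀ x ∈ frontier Ω, h t x ≠ 0) →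
    deg (h 0) Ω = deg (h 1) Ω

/-- `f` has Brouwer degree `k`: `deg f` computed on any ball containing `f⁻¹(0)` equals `k`. -/
def HasDeg {n : ℕ} (D : DegreeTheory n) (f : Euc n → Euc n) (k : ℤ) : Prop :=
  ∀ R : ℝ, 0 < R → f ⁻¹' {0} ⊆ ball 0 R → D.deg f (ball 0 R) = k

set_option linter.unusedSectionVars false
set_option linter.style.longLine false
namespace PG
open scoped Topology NNReal

section Flow
variable {V : Type*} [NormedAddCommGroup V] [NormedSpace ℝ V] [FiniteDimensional ℝ V]

/-- Global integral curves of an autonomous field. -/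
def IsCurve (Z : V → V) (γ : ℝ → V) : Prop := ∀ t, HasDerivAt γ (Z (γ t)) t

lemma IsCurve.continuous {Z : V → V} {γ : ℝ → V} (h : IsCurve Z γ) : Continuous γ :=
  continuous_iff_continuousAt.2 fun t => (h t).continuousAt

lemma lip_ball {Z : V → V} (hZ : ContDiff ℝ 1 Z) (R : ℝ) :
    ∃ K : ℝ≥0, LipschitzOnWith K Z (closedBall 0 R) :=
  hZ.contDiffOn.exists_lipschitzOnWith one_ne_zero (convex_closedBall _ _)
    (isCompact_closedBall _ _)

lemma bdd_on_Icc {γ : ℝ → V} {a b : ℝ} (h : ContinuousOn γ (Icc a b)) :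
    ∃ R : ℝ, ∀ t ∈ Icc a b, γ t ∈ closedBall (0 : V) R := by
  obtain ⟨R, hR⟩ := (isCompact_Icc.image_of_continuousOn h).isBounded.subset_closedBall 0
  exact ⟨R, fun t ht => hR (mem_image_of_mem _ ht)⟩

lemma unique_Icc {Z : V → V} (hZ : ContDiff ℝ 1 Z) {f g : ℝ → V} {a b : ℝ}
    (hf : ContinuousOn f (Icc a b))
    (hf' : ∀ t ∈ Ico a b, HasDerivWithinAt f (Z (f t)) (Ici t) t)
    (hg : ContinuousOn g (Icc a b))
    (hg' : ∀ t ∈ Ico a b, HasDerivWithinAt g (Z (g t)) (Ici t) t)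
    (h : f a = g a) : EqOn f g (Icc a b) := by
  obtain ⟨R1, h1⟩ := bdd_on_Icc hf
  obtain ⟨R2, h2⟩ := bdd_on_Icc hg
  obtain ⟨K, hK⟩ := lip_ball hZ (max R1 R2)
  exact ODE_solution_unique_of_mem_Icc_right (v := fun _ => Z) (s := fun _ => closedBall 0 (max R1 R2))
    (fun _ _ => hK) hf hf'
    (fun t ht => closedBall_subset_closedBall (le_max_left _ _) (h1 t (Ico_subset_Icc_self ht)))
    hg hg' (fun t ht => closedBall_subset_closedBall (le_max_right _ _)
      (h2 t (Ico_subset_Icc_self ht))) h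

lemma unique_Ioo {Z : V → V} (hZ : ContDiff ℝ 1 Z) {f g : ℝ → V} {a b t₀ : ℝ}
    (ht : t₀ ∈ Ioo a b)
    (hf : ContinuousOn f (Icc a b))
    (hf' : ∀ t ∈ Ioo a b, HasDerivAt f (Z (f t)) t)
    (hg : ContinuousOn g (Icc a b))
    (hg' : ∀ t ∈ Ioo a b, HasDerivAt g (Z (g t)) t)
    (h : f t₀ = g t₀) : EqOn f g (Icc a b) := by
  obtain ⟨R1, h1⟩ := bdd_on_Icc hf
  obtain ⟨R2, h2⟩ := bdd_on_Icc hg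
  obtain ⟨K, hK⟩ := lip_ball hZ (max R1 R2)
  exact ODE_solution_unique_of_mem_Icc (v := fun _ => Z) (s := fun _ => closedBall 0 (max R1 R2))
    (fun _ _ => hK) ht hf hf'
    (fun t ht => closedBall_subset_closedBall (le_max_left _ _) (h1 t (Ioo_subset_Icc_self ht)))
    hg hg' (fun t ht => closedBall_subset_closedBall (le_max_right _ _)
      (h2 t (Ioo_subset_Icc_self ht))) h

lemma IsCurve.unique {Z : V → V} (hZ : ContDiff ℝ 1 Z) {f g : ℝ → V}
    (hf : IsCurve Z f) (hg : IsCurve Z g) {t₀ : ℝ} (h : f t₀ = g t₀) : f = g := by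
  ext t
  refine unique_Ioo hZ (a := min t t₀ - 1) (b := max t t₀ + 1) (t₀ := t₀) ?_
    hf.continuous.continuousOn (fun t _ => hf t) hg.continuous.continuousOn (fun t _ => hg t) h ?_
  · constructor
    · linarith [min_le_right t t₀]
    · linarith [le_max_right t t₀]
  · constructor
    · linarith [min_le_left t t₀]
    · linarith [le_max_left t t₀]

lemma IsCurve.shift {Z : V → V} {f : ℝ → V} (hf : IsCurve Z f) (c : ℝ) :
    IsCurve Z (fun t => f (c + t)) := by
  intro t
  simpa using (hf (c + t)).comp_const_add c t

lemma exists_curve_Icc {Z : V → V} (hZ : ContDiff ℝ 1 Z) {M : ℝ} (hM : ∀ x, ‖Z x‖ ≤ M)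
    (x : V) (N : ℝ) (hN : 0 < N) :
    ∃ α : ℝ → V, α 0 = x ∧ ContinuousOn α (Icc (-N) N) ∧
      ∀ t ∈ Ioo (-N) N, HasDerivAt α (Z (α t)) t := by
  have hM0 : 0 ≤ M := (norm_nonneg _).trans (hM x)
  obtain ⟨K, hK⟩ := hZ.contDiffOn.exists_lipschitzOnWith one_ne_zero
    (convex_closedBall x (M * N)) (isCompact_closedBall _ _)
  have hpl : IsPicardLindelof (fun _ => Z) (tmin := -N) (tmax := N)
      ⟨0, by constructor <;> linarith⟩ x ⟨M * N, by positivity⟩ 0 ⟨M, hM0⟩ K := by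
    refine IsPicardLindelof.of_time_independent (fun y _ => hM y) hK ?_
    simp only [sub_zero, sub_neg_eq_add, zero_add, max_self, NNReal.coe_zero]
    exact le_rfl
  obtain ⟨α, h0, h1⟩ := hpl.exists_eq_forall_mem_Icc_hasDerivWithinAt₀
  refine ⟨α, h0, fun t ht => (h1 t ht).continuousWithinAt, fun t ht => ?_⟩
  exact (h1 t (Ioo_subset_Icc_self ht)).hasDerivAt (Icc_mem_nhds ht.1 ht.2)

lemma exists_curve {Z : V → V} (hZ : ContDiff ℝ 1 Z) {M : ℝ} (hM : ∀ x, ‖Z x‖ ≤ M)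
    (x : V) : ∃ γ : ℝ → V, γ 0 = x ∧ IsCurve Z γ := by
  choose α h0 hc hd using fun n : ℕ => exists_curve_Icc hZ hM x (n + 1) (by positivity)
  have key : ∀ m n : ℕ, m ≤ n → EqOn (α m) (α n) (Icc (-(m + 1 : ℝ)) (m + 1)) := by
    intro m n hmn
    have hmn' : (m : ℝ) ≤ n := by exact_mod_cast hmn
    refine unique_Ioo hZ (t₀ := 0) ⟨by linarith [(Nat.cast_nonneg m : (0:ℝ) ≤ m)], by positivity⟩ (hc m) (hd m)
      ((hc n).mono (Icc_subset_Icc (by linarith) (by linarith)))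
      (fun t ht => hd n t ⟨by linarith [ht.1], by linarith [ht.2]⟩) ((h0 m).trans (h0 n).symm)
  have key2 : ∀ m n : ℕ, ∀ t : ℝ, |t| ≤ m → |t| ≤ n → α m t = α n t := by
    intro m n t hm hn
    rcases le_total m n with h | h
    · exact key m n h ⟨by linarith [neg_abs_le t], by linarith [le_abs_self t]⟩
    · exact (key n m h ⟨by linarith [neg_abs_le t], by linarith [le_abs_self t]⟩).symm
  refine ⟨fun t => α ⌈|t|⌉₊ t, by simp [h0], fun t => ?_⟩
  have h1 := hd ⌈|t| + 1⌉₊ t (by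
    have := Nat.le_ceil (|t| + 1)
    constructor <;> linarith [neg_abs_le t, le_abs_self t])
  have h2 : α ⌈|t|⌉₊ t = α ⌈|t| + 1⌉₊ t :=
    key2 _ _ _ (Nat.le_ceil _) (by linarith [Nat.le_ceil (|t| + 1)])
  simp only [h2]
  refine h1.congr_of_eventuallyEq ?_
  have : ∀ᶠ s in 𝓝 t, |s| < |t| + 1 :=
    (continuous_abs.tendsto t).eventually (gt_mem_nhds (by linarith))
  filter_upwards [this] with s hs
  exact key2 _ _ _ (Nat.le_ceil _) (by linarith [Nat.le_ceil (|t| + 1)])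

lemma contDiff_one_of_strict {W : Type*} [NormedAddCommGroup W] [NormedSpace ℝ W]
    {f : V → W} {f' : V → V →L[ℝ] W} (h : ∀ x, HasStrictFDerivAt f (f' x) x) :
    ContDiff ℝ 1 f := by
  rw [contDiff_one_iff_hasFDerivAt]
  refine ⟨f', ?_, fun x => (h x).hasFDerivAt⟩
  rw [Metric.continuous_iff']
  intro x ε hε
  have h1 := (h x).isLittleO.def (half_pos hε)
  have h2 : ∀ᶠ p in 𝓝 (x, x), ∀ᶠ q in 𝓝 p, _ := eventually_eventually_nhds.2 h1
  rw [nhds_prod_eq] at h2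
  have h3 := h2.diag_of_prod
  filter_upwards [h3] with y hy
  have h4 : ∀ᶠ z in 𝓝 y, ‖f z - f y - (f' x) (z - y)‖ ≤ ε / 2 * ‖z - y‖ :=
    (Continuous.tendsto (by fun_prop : Continuous fun z : V => (z, y)) y).eventually hy
  have h5 : HasFDerivAt (fun z => f z - f' x z) (f' y - f' x) y :=
    (h y).hasFDerivAt.sub (f' x).hasFDerivAt
  have h6 := h5.le_of_lip' (C := ε / 2) (by positivity) (by
    filter_upwards [h4] with z hz
    refine le_trans (le_of_eq ?_) hz
    congr 1
    rw [map_sub]; abel)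
  rw [dist_eq_norm]; linarith

end Flow

section Flow2
variable {V : Type*} [NormedAddCommGroup V] [NormedSpace ℝ V] [FiniteDimensional ℝ V]

lemma flow_lip {Z : V → V} {K : ℝ≥0} (hK : LipschitzWith K Z) {f g : ℝ → V}
    (hf : IsCurve Z f) (hg : IsCurve Z g) {t : ℝ} (ht : 0 ≤ t) :
    dist (f t) (g t) ≤ dist (f 0) (g 0) * Real.exp (K * t) := by
  have := dist_le_of_trajectories_ODE (v := fun _ => Z) (a := 0) (b := t) (fun _ => hK)
    hf.continuous.continuousOn (fun s _ => (hf s).hasDerivWithinAt)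
    hg.continuous.continuousOn (fun s _ => (hg s).hasDerivWithinAt) le_rfl t ⟨ht, le_rfl⟩
  simpa using this

/-- Linearized flow along a curve, for a small coefficient matrix. -/
lemma exists_lin {A : ℝ → V →L[ℝ] V} (hA : Continuous A) (hb : ∀ s, ‖A s‖ ≤ 1 / 2) :
    ∃ W : ℝ → V →L[ℝ] V, W 0 = ContinuousLinearMap.id ℝ V ∧ ContinuousOn W (Icc 0 1) ∧
      ∀ t ∈ Ico (0:ℝ) 1, HasDerivWithinAt W ((A t).comp (W t)) (Ici t) t := by
  have hpl : IsPicardLindelof (fun s (W : V →L[ℝ] V) => (A s).comp W) (tmin := 0) (tmax := 1)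
      ⟨0, by constructor <;> norm_num⟩ (ContinuousLinearMap.id ℝ V) 1 0 1 1 := by
    refine ⟨fun t _ => ?_, fun x _ => ?_, fun t _ x hx => ?_, by simp⟩
    · refine LipschitzOnWith.of_dist_le_mul fun x _ y _ => ?_
      rw [dist_eq_norm, dist_eq_norm, ← ContinuousLinearMap.comp_sub]
      refine (ContinuousLinearMap.opNorm_comp_le _ _).trans ?_
      refine mul_le_mul_of_nonneg_right ?_ (norm_nonneg _)
      have := hb t
      simp; linarith
    · exact (hA.clm_comp continuous_const).continuousOn
    · refine (ContinuousLinearMap.opNorm_comp_le _ _).trans ?_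
      have h1 : ‖x‖ ≤ 2 := by
        have h2 : ‖x - ContinuousLinearMap.id ℝ V‖ ≤ 1 := by simpa [dist_eq_norm] using hx
        have h3 : ‖ContinuousLinearMap.id ℝ V‖ ≤ 1 := ContinuousLinearMap.norm_id_le
        have := norm_add_le (x - ContinuousLinearMap.id ℝ V) (ContinuousLinearMap.id ℝ V)
        rw [sub_add_cancel] at this
        linarith
      have := mul_le_mul (hb t) h1 (norm_nonneg _) (by norm_num)
      simpa using this
  obtain ⟨W, h0, h1⟩ := hpl.exists_eq_forall_mem_Icc_hasDerivWithinAt₀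
  refine ⟨W, h0, fun t ht => (h1 t ht).continuousWithinAt, fun t ht => ?_⟩
  refine (h1 t (Ico_subset_Icc_self ht)).mono_of_mem_nhdsWithin ?_
  exact mem_of_superset (Icc_mem_nhdsGE ht.2) (Icc_subset_Icc_left ht.1)

lemma strict_small {Z : V → V} (hZ : ContDiff ℝ 1 Z) (hK : LipschitzWith (1 / 2) Z)
    {Φ : V → ℝ → V} (h0 : ∀ x, Φ x 0 = x) (hΦ : ∀ x, IsCurve Z (Φ x)) :
    ContDiff ℝ 1 (fun x => Φ x 1) := by
  have hDZ : Continuous (fderiv ℝ Z) := hZ.continuous_fderiv one_ne_zero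
  have hex : ∀ x, ∃ W : V →L[ℝ] V, HasStrictFDerivAt (fun x => Φ x 1) W x := by
    intro x
    have hA : Continuous (fun s => fderiv ℝ Z (Φ x s)) := hDZ.comp (hΦ x).continuous
    have hAb : ∀ s, ‖fderiv ℝ Z (Φ x s)‖ ≤ 1 / 2 := fun s => by
      simpa using norm_fderiv_le_of_lipschitz ℝ hK (x₀ := Φ x s)
    obtain ⟨W, W0, Wc, Wd⟩ := exists_lin hA hAb
    refine ⟨W 1, HasStrictFDerivAt.of_isLittleO ?_⟩
    rw [Asymptotics.isLittleO_iff]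
    intro c hc
    -- uniform continuity of the derivative near the curve
    obtain ⟨δ, hδ, hunif⟩ : ∃ δ > 0, ∀ s ∈ Icc (0:ℝ) 1, ∀ w, dist w (Φ x s) < δ →
        ‖fderiv ℝ Z w - fderiv ℝ Z (Φ x s)‖ ≤ c / 4 := by
      have hcomp : IsCompact ((Φ x) '' Icc 0 1) :=
        isCompact_Icc.image (hΦ x).continuous
      have := hcomp.uniformContinuousAt_of_continuousAt (fderiv ℝ Z)
        (fun a _ => hDZ.continuousAt) (Metric.dist_mem_uniformity (ε := c / 4) (by positivity))
      obtain ⟨δ, hδ, h⟩ := Metric.mem_uniformity_dist.1 this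
      refine ⟨δ, hδ, fun s hs w hw => ?_⟩
      have := h (a := Φ x s) (b := w) (by rwa [dist_comm]) (mem_image_of_mem _ hs)
      simp only [mem_ofPred_eq] at this
      rw [dist_comm, dist_eq_norm] at this
      exact this.le
    have hexp : Real.exp (1 / 2) ≤ 2 := by
      have h1 : Real.exp (1 / 2) ^ 2 = Real.exp 1 := by
        rw [← Real.exp_nat_mul]; norm_num
      have h2 := Real.exp_one_lt_d9
      nlinarith [Real.exp_pos (1 / 2)]
    have hL : ∀ y z : V, ∀ s ∈ Icc (0:ℝ) 1, dist (Φ y s) (Φ z s) ≤ 2 * dist y z := by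
      intro y z s hs
      have := flow_lip hK (hΦ y) (hΦ z) hs.1
      rw [h0, h0] at this
      have h3 : Real.exp (((1 / 2 : ℝ≥0) : ℝ) * s) ≤ 2 := by
        refine le_trans (Real.exp_le_exp.2 ?_) hexp
        have := hs.2
        simp; linarith
      nlinarith [dist_nonneg (x := y) (y := z)]
    have hnear : ∀ᶠ p : V × V in 𝓝 (x, x), dist p.1 x < δ / 2 ∧ dist p.2 x < δ / 2 := by
      rw [nhds_prod_eq]
      exact prod_mem_prod (ball_mem_nhds x (half_pos hδ)) (ball_mem_nhds x (half_pos hδ))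
    filter_upwards [hnear] with p hp
    obtain ⟨y, z⟩ := p
    simp only at hp ⊢
    have hball : ∀ y, dist y x < δ / 2 → ∀ s ∈ Icc (0:ℝ) 1, Φ y s ∈ ball (Φ x s) δ := by
      intro y hy s hs
      have := hL y x s hs
      rw [mem_ball]; linarith
    have main := dist_le_of_approx_trajectories_ODE (K := 1 / 2)
      (v := fun s w => fderiv ℝ Z (Φ x s) w) (a := 0) (b := 1)
      (f := fun s => Φ y s - Φ z s) (f' := fun s => Z (Φ y s) - Z (Φ z s))
      (g := fun s => W s (y - z)) (g' := fun s => fderiv ℝ Z (Φ x s) (W s (y - z)))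
      (εf := c / 4 * (2 * dist y z)) (εg := 0) (δ := 0)
      (fun s => by
        refine LipschitzWith.of_dist_le_mul fun u w => ?_
        rw [dist_eq_norm, dist_eq_norm, ← map_sub]
        exact (ContinuousLinearMap.le_opNorm _ _).trans
          (mul_le_mul_of_nonneg_right (by simpa using hAb s) (norm_nonneg _)))
      ((hΦ y).continuous.sub (hΦ z).continuous).continuousOn
      (fun s _ => ((hΦ y s).sub (hΦ z s)).hasDerivWithinAt)
      (fun s hs => by
        have hs' := Ico_subset_Icc_self hs
        rw [dist_eq_norm]
        refine ((convex_ball (Φ x s) δ).norm_image_sub_le_of_norm_fderiv_le'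
          (fun u _ => (hZ.differentiable one_ne_zero) u) (fun u hu => hunif s hs' u hu)
          (hball z hp.2 s hs') (hball y hp.1 s hs')).trans ?_
        rw [← dist_eq_norm]
        exact mul_le_mul_of_nonneg_left (hL y z s hs') (by positivity))
      (Wc.clm_apply continuousOn_const)
      (fun s hs => by
        simpa using (Wd s hs).clm_apply (hasDerivWithinAt_const s (Ici s) (y - z)))
      (fun s _ => by simp)
      (by simp [h0, W0]) 1 ⟨zero_le_one, le_rfl⟩
    rw [gronwallBound_of_K_ne_0 (by norm_num)] at main
    rw [dist_eq_norm] at main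
    refine main.trans ?_
    rw [dist_eq_norm]
    have : Real.exp (((1 / 2 : ℝ≥0) : ℝ) * (1 - 0)) ≤ 2 := by simpa using hexp
    have h4 : 0 ≤ c * ‖y - z‖ := by positivity
    have h5 : ((1 / 2 : ℝ≥0) : ℝ) = 1 / 2 := by simp
    rw [h5] at *
    simp only [zero_mul, zero_add, add_zero]
    nlinarith
  choose W hW using hex
  exact contDiff_one_of_strict hW

end Flow2

section Flow3
variable {V : Type*} [NormedAddCommGroup V] [NormedSpace ℝ V] [FiniteDimensional ℝ V]

lemma flow_group {Z : V → V} (hZ : ContDiff ℝ 1 Z) {Φ : V → ℝ → V} (h0 : ∀ x, Φ x 0 = x)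
    (hΦ : ∀ x, IsCurve Z (Φ x)) (x : V) (s t : ℝ) : Φ (Φ x s) t = Φ x (s + t) := by
  have := IsCurve.unique hZ (hΦ (Φ x s)) ((hΦ x).shift s) (t₀ := 0) (by simp [h0])
  exact congrFun this t

lemma contDiff_lip {Z : V → V} (hZ : ContDiff ℝ 1 Z) {K : ℝ≥0} (hK : LipschitzWith K Z)
    {Φ : V → ℝ → V} (h0 : ∀ x, Φ x 0 = x) (hΦ : ∀ x, IsCurve Z (Φ x)) :
    ContDiff ℝ 1 (fun x => Φ x 1) := by
  obtain ⟨n, hn⟩ := exists_nat_ge (2 * (K : ℝ) + 1)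
  have hn0 : (0:ℝ) < n := by linarith [K.2, show (0:ℝ) ≤ K from K.2]
  have h1 : ContDiff ℝ 1 (fun x => Φ x ((n:ℝ)⁻¹)) := by
    have := strict_small (Z := fun x => (n:ℝ)⁻¹ • Z x) (contDiff_const.smul hZ) ?_
      (Φ := fun x s => Φ x ((n:ℝ)⁻¹ * s)) (by simpa using h0) ?_
    · simpa using this
    · refine LipschitzWith.of_dist_le_mul fun x y => ?_
      have h2 := hK.dist_le_mul x y
      rw [dist_smul₀, Real.norm_of_nonneg (by positivity)]
      have h3 : (n:ℝ)⁻¹ * K ≤ 1 / 2 := by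
        rw [inv_mul_le_iff₀ hn0]; linarith
      have h4 : ((1 / 2 : ℝ≥0) : ℝ) = 1 / 2 := by simp
      rw [h4]
      calc (n:ℝ)⁻¹ * dist (Z x) (Z y) ≤ (n:ℝ)⁻¹ * (K * dist x y) := by gcongr
        _ = ((n:ℝ)⁻¹ * K) * dist x y := by ring
        _ ≤ _ := by gcongr
    · intro x s
      have := (hΦ x ((n:ℝ)⁻¹ * s)).scomp s (((hasDerivAt_id s).const_mul ((n:ℝ)⁻¹)))
      simpa [Function.comp_def] using this
  have h2 : ∀ m : ℕ, ContDiff ℝ 1 (fun x => Φ x (m * (n:ℝ)⁻¹)) := by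
    intro m
    induction m with
    | zero => simpa [h0] using (contDiff_fun_id : ContDiff ℝ 1 (fun x : V => x))
    | succ m ih =>
      have : (fun x => Φ x ((m + 1 : ℕ) * (n:ℝ)⁻¹)) =
          (fun x => Φ x ((n:ℝ)⁻¹)) ∘ (fun x => Φ x (m * (n:ℝ)⁻¹)) := by
        ext x
        simp only [Function.comp]
        rw [flow_group hZ h0 hΦ]
        congr 1
        push_cast; ring
      rw [this]
      exact h1.comp ih
  have := h2 n
  rwa [mul_inv_cancel₀ hn0.ne'] at this

lemma contDiff_time_one {Z : V → V} (hZ : ContDiff ℝ 1 Z)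
    {Φ : V → ℝ → V} (h0 : ∀ x, Φ x 0 = x) (hΦ : ∀ x, IsCurve Z (Φ x)) :
    ContDiff ℝ 1 (fun x => Φ x 1) := by
  rw [contDiff_iff_contDiffAt]
  intro x
  obtain ⟨R, hR⟩ := bdd_on_Icc (a := 0) (b := 1) (hΦ x).continuous.continuousOn
  have hR0 : 0 ≤ R := by
    have := hR 0 ⟨le_rfl, zero_le_one⟩
    rw [mem_closedBall] at this
    exact dist_nonneg.trans this
  let χ : ContDiffBump (0 : V) := ⟨R + 1, R + 2, by linarith, by linarith⟩
  set Z1 : V → V := fun y => χ y • Z y with hZ1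
  have hZ1c : ContDiff ℝ 1 Z1 := χ.contDiff.smul hZ
  have hsupp : HasCompactSupport Z1 := χ.hasCompactSupport.smul_right
  have hagree : ∀ y ∈ closedBall (0 : V) (R + 1), Z1 y = Z y := by
    intro y hy
    have : χ y = 1 := χ.one_of_mem_closedBall hy
    simp [hZ1, this]
  obtain ⟨K, hK⟩ := hZ1c.lipschitzWith_of_hasCompactSupport hsupp one_ne_zero
  obtain ⟨M, hM⟩ := hsupp.exists_bound_of_continuous hZ1c.continuous
  choose Ψ hΨ0 hΨ using exists_curve hZ1c hM
  have hC : ContDiff ℝ 1 (fun x => Ψ x 1) := contDiff_lip hZ1c hK hΨ0 hΨ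
  have heq : EqOn (Φ x) (Ψ x) (Icc 0 1) := by
    refine unique_Icc hZ1c (hΦ x).continuous.continuousOn (fun t ht => ?_)
      (hΨ x).continuous.continuousOn (fun t ht => (hΨ x t).hasDerivWithinAt) (by rw [h0, hΨ0])
    rw [hagree _ (closedBall_subset_closedBall (by linarith) (hR t (Ico_subset_Icc_self ht)))]
    exact (hΦ x t).hasDerivWithinAt
  refine hC.contDiffAt.congr_of_eventuallyEq ?_
  filter_upwards [ball_mem_nhds x (Real.exp_pos (-K))] with y hy
  refine unique_Icc hZ (a := 0) (b := 1) (hΦ y).continuous.continuousOn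
    (fun t ht => (hΦ y t).hasDerivWithinAt)
    (hΨ y).continuous.continuousOn (fun t ht => ?_) (by rw [h0, hΨ0]) ⟨zero_le_one, le_rfl⟩
  rw [← hagree _ ?_]
  · exact (hΨ y t).hasDerivWithinAt
  · have h1 := flow_lip hK (hΨ y) (hΨ x) ht.1
    rw [hΨ0, hΨ0] at h1
    have h2 : Real.exp (K * t) ≤ Real.exp K := by
      apply Real.exp_le_exp.2
      have : (0:ℝ) ≤ K := K.2
      nlinarith [ht.2]
    have h3 : dist (Ψ y t) (Ψ x t) ≤ 1 := by
      refine h1.trans ?_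
      rw [mem_ball] at hy
      calc dist y x * Real.exp (K * t) ≤ Real.exp (-K) * Real.exp K := by gcongr
        _ = 1 := by rw [← Real.exp_add]; simp
    have h4 := hR t (Ico_subset_Icc_self ht)
    rw [heq (Ico_subset_Icc_self ht)] at h4
    rw [mem_closedBall] at h4 ⊢
    linarith [dist_triangle (Ψ y t) (Ψ x t) 0]

/-- Global flow of a bounded `C¹` field, jointly `C¹`. -/
theorem exists_flow {Z : V → V} (hZ : ContDiff ℝ 1 Z) {M : ℝ} (hM : ∀ x, ‖Z x‖ ≤ M) :
    ∃ Φ : V → ℝ → V, (∀ x, Φ x 0 = x) ∧ (∀ x, IsCurve Z (Φ x)) ∧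
      (∀ x s t, Φ (Φ x s) t = Φ x (s + t)) ∧ ContDiff ℝ 1 (fun p : V × ℝ => Φ p.1 p.2) := by
  choose Φ h0 hΦ using exists_curve hZ hM
  refine ⟨Φ, h0, hΦ, flow_group hZ h0 hΦ, ?_⟩
  have := contDiff_time_one (V := V × ℝ) (Z := fun p => (p.2 • Z p.1, 0))
    (Φ := fun p r => (Φ p.1 (p.2 * r), p.2)) ?_ (by simp [h0]) ?_
  · simpa [Function.comp_def] using contDiff_fst.comp this
  · exact (contDiff_snd.smul (hZ.comp contDiff_fst)).prodMk contDiff_const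
  · intro p r
    refine HasDerivAt.prodMk ?_ (hasDerivAt_const _ _)
    have := (hΦ p.1 (p.2 * r)).scomp r (((hasDerivAt_id r).const_mul p.2))
    simpa [Function.comp_def] using this

end Flow3

section Lifts

lemma barrier {X : Type*} [TopologicalSpace X] {s : Set X} (hs : IsPreconnected s) {g : X → ℝ}
    (hg : ContinuousOn g s) {c : ℝ} (hc : ∀ t ∈ s, g t ≠ c) {x y : X} (hx : x ∈ s) (hy : y ∈ s)
    (h : g x < c) : g y < c := by
  by_contra hcon
  push Not at hcon
  obtain ⟨t, ht, h'⟩ := hs.intermediate_value hx hy hg ⟨h.le, hcon⟩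
  exact hc t ht h'

lemma barrier' {X : Type*} [TopologicalSpace X] {s : Set X} (hs : IsPreconnected s) {g : X → ℝ}
    (hg : ContinuousOn g s) {c : ℝ} (hc : ∀ t ∈ s, g t ≠ c) {x y : X} (hx : x ∈ s) (hy : y ∈ s)
    (h : c < g x) : c < g y := by
  by_contra hcon
  push Not at hcon
  obtain ⟨t, ht, h'⟩ := hs.intermediate_value hy hx hg ⟨hcon, h.le⟩
  exact hc t ht h'

lemma int_lt {n m : ℤ} (h : 2 * Real.pi * n < 2 * Real.pi * m) :
    2 * Real.pi * n + 2 * Real.pi ≤ 2 * Real.pi * m := by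
  have hpi := Real.pi_pos
  have h1 : (n:ℝ) < m := lt_of_mul_lt_mul_left h (by positivity)
  have h2 : n + 1 ≤ m := by exact_mod_cast h1
  have h3 : (n:ℝ) + 1 ≤ m := by exact_mod_cast h2
  nlinarith

lemma int_const {X : Type*} [TopologicalSpace X] {s : Set X} (hs : IsPreconnected s) {g : X → ℝ}
    (hg : ContinuousOn g s) (hi : ∀ t ∈ s, ∃ n : ℤ, g t = 2 * Real.pi * n) {x y : X}
    (hx : x ∈ s) (hy : y ∈ s) : g x = g y := by
  have hpi := Real.pi_pos
  have aux : ∀ x ∈ s, ∀ y ∈ s, ¬ g x < g y := by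
    intro x hx y hy h
    obtain ⟨n, hn⟩ := hi x hx
    obtain ⟨m, hm⟩ := hi y hy
    have h1 : g y < g x + Real.pi := by
      refine barrier hs hg (fun t ht h => ?_) hx hy (by linarith)
      obtain ⟨k, hk⟩ := hi t ht
      have h2 := int_lt (n := n) (m := k) (by linarith)
      linarith
    have := int_lt (n := n) (m := m) (by linarith)
    linarith
  exact le_antisymm (not_lt.1 (aux y hy x hx)) (not_lt.1 (aux x hx y hy))

lemma exists_lift {X : Type*} [NormedAddCommGroup X] [NormedSpace ℝ X] {g : X → ℂ}
    (hg : Continuous g) (h0 : ∀ x, g x ≠ 0) :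
    ∃ f : X → ℂ, Continuous f ∧ ∀ x, Complex.exp (f x) = g x := by
  obtain ⟨f, ⟨-, hf⟩, -⟩ := Complex.isCoveringMapOn_exp.existsUnique_continuousMap_lifts
    (⟨g, hg⟩ : C(X, ℂ)) (a₀ := (0 : X)) (Complex.exp_log (h0 0)) (fun x => h0 x)
  exact ⟨f, f.continuous, fun x => congrFun hf x⟩

lemma exp_re {w : ℂ} : (Complex.exp w).re = Real.exp w.re * Real.cos w.im := Complex.exp_re w

lemma im_diff_of_exp {w : ℂ} {r θ : ℝ} (hr : 0 < r)
    (h : Complex.exp w = r * Complex.exp (θ * Complex.I)) :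
    ∃ n : ℤ, w.im - θ = 2 * Real.pi * n := by
  have h1 : Complex.exp w = Complex.exp (Real.log r + θ * Complex.I) := by
    rw [Complex.exp_add, ← Complex.ofReal_exp, Real.exp_log hr, h]
  obtain ⟨n, hn⟩ := Complex.exp_eq_exp_iff_exists_int.1 h1
  refine ⟨n, ?_⟩
  have := congrArg Complex.im hn
  simp at this
  linarith

lemma curve_inc {Z : ℂ → ℂ} {γ : ℝ → ℂ} (hγ : IsCurve Z γ) {c d : ℝ}
    (h : ∀ t ∈ Icc c d, 0 < (Z (γ t)).re) {s t : ℝ} (hs : c ≤ s) (hst : s < t) (ht : t ≤ d) :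
    (γ s).re < (γ t).re := by
  have hd : ∀ t, HasDerivAt (fun t => (γ t).re) ((Z (γ t)).re) t := fun t =>
    (Complex.reCLM.hasFDerivAt.comp_hasDerivAt t (hγ t))
  refine strictMonoOn_of_deriv_pos (convex_Icc c d)
    (fun t _ => (hd t).continuousAt.continuousWithinAt) (fun t ht => ?_)
    ⟨hs, hst.le.trans ht⟩ ⟨hs.trans hst.le, ht⟩ hst
  rw [(hd t).deriv]
  exact h t (interior_subset ht)

end Lifts

section Key
open Complex (I)

/-- Divided difference of a curve, as an integral. -/
def dq (Z : ℂ → ℂ) (γ : ℝ → ℂ) (p : ℝ × ℝ) : ℂ :=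
  ∫ u in (0:ℝ)..1, Z (γ (p.1 + u * (p.2 - p.1)))

lemma dq_cont {Z : ℂ → ℂ} (hZ : Continuous Z) {γ : ℝ → ℂ} (hγ : Continuous γ) :
    Continuous (dq Z γ) := by
  unfold dq
  refine intervalIntegral.continuous_parametric_intervalIntegral_of_continuous' ?_ 0 1
  exact hZ.comp (hγ.comp (by fun_prop))

lemma dq_diag {Z : ℂ → ℂ} {γ : ℝ → ℂ} (s : ℝ) : dq Z γ (s, s) = Z (γ s) := by
  simp [dq]

lemma dq_mul {Z : ℂ → ℂ} (hZ : Continuous Z) {γ : ℝ → ℂ} (hγ : IsCurve Z γ) (s t : ℝ) :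
    ((t - s : ℝ) : ℂ) * dq Z γ (s, t) = γ t - γ s := by
  have h1 : ∀ u ∈ uIcc (0:ℝ) 1, HasDerivAt (fun u => γ (s + u * (t - s)))
      ((t - s) • Z (γ (s + u * (t - s)))) u := by
    intro u _
    have := (hγ (s + u * (t - s))).scomp u (((hasDerivAt_id u).mul_const (t - s)).const_add s)
    simpa [Function.comp_def] using this
  have hc : Continuous (fun u => (t - s) • Z (γ (s + u * (t - s)))) :=
    Continuous.const_smul (hZ.comp (hγ.continuous.comp
      (by fun_prop : Continuous fun u : ℝ => s + u * (t - s)))) (t - s)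
  have h2 := intervalIntegral.integral_eq_sub_of_hasDerivAt h1 (hc.intervalIntegrable 0 1)
  rw [intervalIntegral.integral_smul] at h2
  simp only [dq]
  rw [← Complex.real_smul, h2]
  congr 1 <;> congr 1 <;> ring

/-- Retraction of the plane onto a truncated triangle. -/
def rt (a b δ : ℝ) (p : ℝ × ℝ) : ℝ × ℝ :=
  (max a (min b p.1),
    max (max a (min b p.1)) (min (min b (max a (min b p.1) + (b - a - δ))) p.2))

lemma rt_cont (a b δ : ℝ) : Continuous (rt a b δ) := by
  unfold rt; fun_prop

lemma rt_mem {a b δ : ℝ} (hδ : 0 < δ) (hab : 2 * δ ≤ b - a) (p : ℝ × ℝ) :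
    a ≤ (rt a b δ p).1 ∧ (rt a b δ p).1 ≤ (rt a b δ p).2 ∧ (rt a b δ p).2 ≤ b ∧
      (rt a b δ p).2 - (rt a b δ p).1 ≤ b - a - δ := by
  simp only [rt]
  set s := max a (min b p.1) with hs
  have h1 : a ≤ s := le_max_left _ _
  have h2 : s ≤ b := max_le (by linarith) (min_le_left _ _)
  refine ⟨h1, le_max_left _ _, max_le h2 ((min_le_left _ _).trans (min_le_left _ _)), ?_⟩
  have : max s (min (min b (s + (b - a - δ))) p.2) ≤ s + (b - a - δ) :=
    max_le (by linarith) ((min_le_left _ _).trans (min_le_right _ _))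
  linarith

lemma rt_id {a b δ s t : ℝ} (h1 : a ≤ s) (h2 : s ≤ t) (h3 : t ≤ b) (h4 : t - s ≤ b - a - δ) :
    rt a b δ (s, t) = (s, t) := by
  have e1 : min b s = s := min_eq_right (h2.trans h3)
  have e2 : max a s = s := max_eq_right h1
  have e3 : min (min b (s + (b - a - δ))) t = t := min_eq_right (le_min h3 (by linarith))
  simp only [rt, e1, e2, e3, max_eq_right h2]

lemma cos_ne_zero_of {θ r : ℝ} (h : r * Real.cos θ ≠ 0) (k : ℤ) :
    θ ≠ Real.pi / 2 + k * Real.pi := by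
  rintro rfl
  apply h
  rw [Real.cos_eq_zero_iff.2 ⟨k, by ring⟩]; simp

theorem key_first {Z : ℂ → ℂ} (hZ : Continuous Z) {ρ Θ : ℂ → ℝ} (hρ : ∀ x, 0 < ρ x)
    (hΘ : Continuous Θ) (hZe : ∀ x, Z x = ρ x * Complex.exp (Θ x * I))
    {γ : ℝ → ℂ} (hγ : IsCurve Z γ) {a b δ : ℝ} (hδ : 0 < δ) (hab : 2 * δ ≤ b - a)
    (ha : (γ a).re = 0) (hb : (γ b).re = 0)
    (ha1 : |Θ (γ a)| < Real.pi / 2) (hb1 : |Θ (γ b)| < Real.pi / 2)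
    (ha2 : ∀ t ∈ Icc a (a + δ), 0 < (Z (γ t)).re)
    (hb2 : ∀ t ∈ Icc (b - δ) b, 0 < (Z (γ t)).re)
    (hinj : ∀ s t, a ≤ s → s < t → t ≤ b → t - s < b - a → γ s ≠ γ t)
    (hav : ∀ s ∈ Ioo a b, ∀ c d : ℝ, 0 ≤ c → 0 ≤ d → c + d = 1 → γ s ≠ c * γ a + d * γ b) :
    False := by
  have hpi := Real.pi_pos
  have hq0 : ∀ s t, a ≤ s → s ≤ t → t ≤ b → t - s ≤ b - a - δ → dq Z γ (s, t) ≠ 0 := by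
    intro s t h1 h2 h3 h4 h5
    rcases h2.eq_or_lt with h | h
    · subst h
      rw [dq_diag, hZe] at h5
      have := (hρ (γ s)).ne'
      simp [Complex.exp_ne_zero, this] at h5
    · have := dq_mul hZ hγ s t
      rw [h5, mul_zero] at this
      exact hinj s t h1 h h3 (by linarith) (sub_eq_zero.1 this.symm).symm
  obtain ⟨L, hLc, hL⟩ := exists_lift ((dq_cont hZ hγ.continuous).comp (rt_cont a b δ)) (fun p => by
    obtain ⟨h1, h2, h3, h4⟩ := rt_mem hδ hab p
    exact hq0 _ _ h1 h2 h3 h4)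
  have hL' : ∀ s t, a ≤ s → s ≤ t → t ≤ b → t - s ≤ b - a - δ →
      Complex.exp (L (s, t)) = dq Z γ (s, t) := by
    intro s t h1 h2 h3 h4
    rw [hL]; simp only [Function.comp, rt_id h1 h2 h3 h4]
  have hLi : Continuous (fun p => (L p).im) := Complex.continuous_im.comp hLc
  -- normalise along the diagonal
  have hdiag : ∀ s ∈ Icc a b, ∃ n : ℤ, (L (s, s)).im - Θ (γ s) = 2 * Real.pi * n := by
    intro s hs
    refine im_diff_of_exp (hρ (γ s)) ?_
    rw [hL' s s hs.1 le_rfl hs.2 (by linarith), dq_diag, hZe]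
  have haI : a ∈ Icc a b := ⟨le_rfl, by linarith⟩
  have hbI : b ∈ Icc a b := ⟨by linarith, le_rfl⟩
  obtain ⟨n, hn⟩ := hdiag a haI
  have hn2 : (L (b, b)).im - Θ (γ b) = 2 * Real.pi * n := by
    rw [← hn]
    refine (int_const (s := Icc a b) isPreconnected_Icc (g := fun s => (L (s, s)).im - Θ (γ s)) ?_ hdiag haI hbI).symm
    exact ((hLi.comp (by fun_prop : Continuous fun s : ℝ => (s, s))).sub
      (hΘ.comp hγ.continuous)).continuousOn
  set T : ℝ → ℝ → ℝ := fun s t => (L (s, t)).im - 2 * Real.pi * n with hT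
  have hTc : ∀ f g : ℝ → ℝ, Continuous f → Continuous g → Continuous (fun s => T (f s) (g s)) :=
    fun f g hf hg => (hLi.comp (hf.prodMk hg)).sub continuous_const
  have hTre : ∀ s t, a ≤ s → s ≤ t → t ≤ b → t - s ≤ b - a - δ →
      Real.exp (L (s, t)).re * Real.cos (T s t) = (dq Z γ (s, t)).re := by
    intro s t h1 h2 h3 h4
    rw [← hL' s t h1 h2 h3 h4, Complex.exp_re]
    congr 1
    simp only [hT]
    rw [show 2 * Real.pi * (n:ℝ) = n * (2 * Real.pi) by ring, Real.cos_sub_int_mul_two_pi]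
  have hdqre : ∀ s t, (t - s) * (dq Z γ (s, t)).re = (γ t).re - (γ s).re := by
    intro s t
    have := congrArg Complex.re (dq_mul hZ hγ s t)
    rwa [Complex.re_ofReal_mul, Complex.sub_re] at this
  -- start
  have hA1 : T a (a + δ) < Real.pi / 2 ∧ -(Real.pi / 2) < T a (a + δ) := by
    have hc : ContinuousOn (fun t => T a t) (Icc a (a + δ)) :=
      (hTc (fun _ => a) id continuous_const continuous_id).continuousOn
    have hne : ∀ t ∈ Icc a (a + δ), Real.exp (L (a, t)).re * Real.cos (T a t) ≠ 0 := by
      intro t ht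
      rw [hTre a t le_rfl ht.1 (by linarith [ht.2]) (by linarith [ht.2])]
      rcases ht.1.eq_or_lt with h | h
      · rw [← h, dq_diag]; exact (ha2 a ⟨le_rfl, by linarith⟩).ne'
      · intro h0
        have h1 := hdqre a t
        have h2 := curve_inc hγ ha2 le_rfl h ht.2
        rw [h0] at h1; linarith
    have h0 : T a a = Θ (γ a) := by simp only [hT]; linarith
    rw [abs_lt] at ha1
    constructor
    · refine barrier isPreconnected_Icc hc (fun t ht => ?_) (x := a) ⟨le_rfl, by linarith⟩ ⟨by linarith, le_rfl⟩
        (by simp only [h0]; exact ha1.2)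
      have := cos_ne_zero_of (hne t ht) 0
      simpa using this
    · refine barrier' isPreconnected_Icc hc (fun t ht => ?_) (x := a) ⟨le_rfl, by linarith⟩ ⟨by linarith, le_rfl⟩
        (by simp only [h0]; exact ha1.1)
      have := cos_ne_zero_of (hne t ht) (-1)
      intro h; apply this; rw [h]; push_cast; ring
  -- end
  have hB2 : T (b - δ) b < Real.pi / 2 ∧ -(Real.pi / 2) < T (b - δ) b := by
    have hc : ContinuousOn (fun t => T t b) (Icc (b - δ) b) :=
      (hTc id (fun _ => b) continuous_id continuous_const).continuousOn
    have hne : ∀ t ∈ Icc (b - δ) b, Real.exp (L (t, b)).re * Real.cos (T t b) ≠ 0 := by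
      intro t ht
      rw [hTre t b (by linarith [ht.1]) ht.2 le_rfl (by linarith [ht.1])]
      rcases ht.2.eq_or_lt with h | h
      · rw [h, dq_diag]; exact (hb2 b ⟨by linarith, le_rfl⟩).ne'
      · intro h0
        have h1 := hdqre t b
        have h2 := curve_inc hγ hb2 ht.1 h le_rfl
        rw [h0] at h1; linarith
    have h0 : T b b = Θ (γ b) := by simp only [hT]; linarith
    rw [abs_lt] at hb1
    constructor
    · refine barrier isPreconnected_Icc hc (fun t ht => ?_) (x := b) ⟨by linarith, le_rfl⟩ ⟨le_rfl, by linarith⟩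
        (by simp only [h0]; exact hb1.2)
      have := cos_ne_zero_of (hne t ht) 0
      simpa using this
    · refine barrier' isPreconnected_Icc hc (fun t ht => ?_) (x := b) ⟨by linarith, le_rfl⟩ ⟨le_rfl, by linarith⟩
        (by simp only [h0]; exact hb1.1)
      have := cos_ne_zero_of (hne t ht) (-1)
      intro h; apply this; rw [h]; push_cast; ring
  -- corner
  have hcneg : ∀ u ∈ Icc 0 δ, Real.cos (T (a + u) (b - δ + u)) < 0 := by
    intro u hu
    have h1 := hTre (a + u) (b - δ + u) (by linarith [hu.1]) (by linarith [hu.1]) (by linarith [hu.2])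
      (by linarith)
    have h2 := hdqre (a + u) (b - δ + u)
    have h3 : (γ (b - δ + u)).re - (γ (a + u)).re < 0 := by
      rcases hu.1.eq_or_lt with h | h
      · subst h
        have := curve_inc hγ hb2 (s := b - δ) (t := b) le_rfl (by linarith) le_rfl
        simp only [add_zero]; linarith
      · have h5 := curve_inc hγ ha2 (s := a) (t := a + u) le_rfl (by linarith) (by linarith [hu.2])
        rcases hu.2.eq_or_lt with h' | h'
        · subst h'
          simp only [sub_add_cancel]; linarith
        · have := curve_inc hγ hb2 (s := b - δ + u) (t := b) (by linarith) (by linarith) le_rfl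
          linarith
    have h4 : (dq Z γ (a + u, b - δ + u)).re < 0 := by
      by_contra hcon
      push Not at hcon
      have : 0 ≤ (b - δ + u - (a + u)) * (dq Z γ (a + u, b - δ + u)).re :=
        mul_nonneg (by linarith) hcon
      linarith
    rw [← h1] at h4
    exact neg_of_mul_neg_right h4 (Real.exp_pos _).le
  obtain ⟨k, hk1, hk2⟩ : ∃ k : ℤ, Real.pi / 2 + 2 * Real.pi * k < T a (b - δ) ∧
      T a (b - δ) < 3 * Real.pi / 2 + 2 * Real.pi * k := by
    have h0 : Real.cos (T a (b - δ)) < 0 := by simpa using hcneg 0 ⟨le_rfl, hδ.le⟩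
    set x := T a (b - δ)
    have hp : (0:ℝ) < 2 * Real.pi := by positivity
    refine ⟨⌊(x - Real.pi / 2) / (2 * Real.pi)⌋, ?_, ?_⟩
    · have h1 := Int.floor_le ((x - Real.pi / 2) / (2 * Real.pi))
      rw [le_div_iff₀ hp] at h1
      rcases h1.eq_or_lt with h | h
      · exfalso
        have : x = Real.pi / 2 + ((⌊(x - Real.pi / 2) / (2 * Real.pi)⌋ : ℤ):ℝ) * (2 * Real.pi) := by
          linarith
        rw [this, Real.cos_add_int_mul_two_pi] at h0
        simp at h0
      · linarith
    · have h1 := Int.lt_floor_add_one ((x - Real.pi / 2) / (2 * Real.pi))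
      rw [div_lt_iff₀ hp] at h1
      set m : ℤ := ⌊(x - Real.pi / 2) / (2 * Real.pi)⌋
      by_contra hcon
      push Not at hcon
      have h2 : 0 ≤ Real.cos (x - (m + 1 : ℤ) * (2 * Real.pi)) := by
        apply Real.cos_nonneg_of_mem_Icc
        push_cast
        constructor <;> linarith
      rw [Real.cos_sub_int_mul_two_pi] at h2
      linarith
  have hB1 : Real.pi / 2 + 2 * Real.pi * k < T (a + δ) b ∧
      T (a + δ) b < 3 * Real.pi / 2 + 2 * Real.pi * k := by
    have hc : ContinuousOn (fun u => T (a + u) (b - δ + u)) (Icc 0 δ) :=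
      (hTc (fun u => a + u) (fun u => b - δ + u) (by fun_prop) (by fun_prop)).continuousOn
    constructor
    · have := barrier' isPreconnected_Icc hc (c := Real.pi / 2 + 2 * Real.pi * k)
        (fun u hu => ?_) (x := 0) (y := δ) ⟨le_rfl, hδ.le⟩ ⟨hδ.le, le_rfl⟩ (by simpa using hk1)
      · simpa using this
      · have := cos_ne_zero_of (r := 1) (by rw [one_mul]; exact (hcneg u hu).ne) (2 * k)
        intro h; apply this; rw [h]; push_cast; ring
    · have := barrier isPreconnected_Icc hc (c := 3 * Real.pi / 2 + 2 * Real.pi * k)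
        (fun u hu => ?_) (x := 0) (y := δ) ⟨le_rfl, hδ.le⟩ ⟨hδ.le, le_rfl⟩ (by simpa using hk2)
      · simpa using this
      · have := cos_ne_zero_of (r := 1) (by rw [one_mul]; exact (hcneg u hu).ne) (2 * k + 1)
        intro h; apply this; rw [h]; push_cast; ring
  -- middle
  have hD : ∀ s ∈ Icc (a + δ) (b - δ), ∀ m : ℤ, T s b - T a s ≠ 2 * Real.pi * m := by
    intro s hs m h
    have e1 := hL' a s le_rfl (by linarith [hs.1]) (by linarith [hs.2]) (by linarith [hs.2])
    have e2 := hL' s b (by linarith [hs.1]) (by linarith [hs.2]) le_rfl (by linarith [hs.1])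
    have e3 : L (s, b) = L (a, s) + (((L (s, b)).re - (L (a, s)).re : ℝ) : ℂ) +
        m * (2 * Real.pi * I) := by
      apply Complex.ext
      · simp
      · simp only [hT] at h
        simp
        linarith
    have e4 : dq Z γ (s, b) = Real.exp ((L (s, b)).re - (L (a, s)).re) * dq Z γ (a, s) := by
      rw [← e1, ← e2, e3]
      rw [Complex.exp_add, Complex.exp_int_mul_two_pi_mul_I, mul_one, Complex.exp_add,
        mul_comm, ← Complex.ofReal_exp]
      simp
    set c := Real.exp ((L (s, b)).re - (L (a, s)).re) with hc
    have hc0 : 0 < c := Real.exp_pos _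
    have f1 := dq_mul hZ hγ a s
    have f2 := dq_mul hZ hγ s b
    rw [e4] at f2
    have p1 : 0 < s - a := by linarith [hs.1]
    have p2 : 0 < b - s := by linarith [hs.2]
    -- (s - a) (γ b - γ s) = (b - s) c (γ s - γ a)
    have f3 : ((s - a : ℝ) : ℂ) * (γ b - γ s) = ((b - s : ℝ) : ℂ) * c * (γ s - γ a) := by
      rw [← f1, ← f2]; ring
    have hden : 0 < (s - a) + (b - s) * c := by positivity
    refine hav s ⟨by linarith, by linarith⟩ ((b - s) * c / ((s - a) + (b - s) * c))
      ((s - a) / ((s - a) + (b - s) * c)) (by positivity) (by positivity)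
      (by field_simp; ring) ?_
    have hdc : (((s - a) + (b - s) * c : ℝ) : ℂ) ≠ 0 := by exact_mod_cast hden.ne'
    have : (((s - a) + (b - s) * c : ℝ) : ℂ) * γ s =
        (((b - s) * c : ℝ) : ℂ) * γ a + ((s - a : ℝ) : ℂ) * γ b := by
      push_cast at f3 ⊢
      linear_combination -f3
    rw [Complex.ofReal_div, Complex.ofReal_div, div_mul_eq_mul_div, div_mul_eq_mul_div, ← add_div,
      ← this, mul_div_cancel_left₀ _ hdc]
  have hDc : ContinuousOn (fun s => T s b - T a s) (Icc (a + δ) (b - δ)) :=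
    ((hTc id (fun _ => b) continuous_id continuous_const).sub
      (hTc (fun _ => a) id continuous_const continuous_id)).continuousOn
  have m1 : a + δ ∈ Icc (a + δ) (b - δ) := ⟨le_rfl, by linarith⟩
  have m2 : b - δ ∈ Icc (a + δ) (b - δ) := ⟨by linarith, le_rfl⟩
  have g1 := barrier' isPreconnected_Icc hDc (fun s hs => hD s hs k) m1 m2 (by linarith)
  have g2 := barrier isPreconnected_Icc hDc (fun s hs => hD s hs (k + 1)) m1 m2
    (by push_cast; linarith)
  push_cast at g2
  have i1 : 2 * Real.pi * (k:ℝ) < 2 * Real.pi * ((-k : ℤ) : ℝ) := by push_cast; linarith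
  have i2 : 2 * Real.pi * ((-k - 1 : ℤ):ℝ) < 2 * Real.pi * ((k + 1 : ℤ) : ℝ) := by
    push_cast; linarith
  have j1 : (k:ℝ) < ((-k : ℤ) : ℝ) := lt_of_mul_lt_mul_left i1 (by positivity)
  have j2 : ((-k - 1 : ℤ):ℝ) < ((k + 1 : ℤ) : ℝ) := lt_of_mul_lt_mul_left i2 (by positivity)
  have j1' : k < -k := by exact_mod_cast j1
  have j2' : -k - 1 < k + 1 := by exact_mod_cast j2
  omega

end Key

section NoReturn
open Complex (I)

lemma polar_re {Z : ℂ → ℂ} {ρ Θ : ℂ → ℝ} 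
    (hZe : ∀ x, Z x = ρ x * Complex.exp (Θ x * I)) (x : ℂ) :
    (Z x).re = ρ x * Real.cos (Θ x) := by
  rw [hZe, Complex.re_ofReal_mul, Complex.exp_ofReal_mul_I_re]

theorem one_hit {Z : ℂ → ℂ} (hZ : ContDiff ℝ 1 Z) {ρ Θ : ℂ → ℝ} (hρ : ∀ x, 0 < ρ x)
    (hΘ : Continuous Θ) (hZe : ∀ x, Z x = ρ x * Complex.exp (Θ x * I))
    {r0 : ℝ} (hr : ∀ x : ℂ, ‖x‖ < r0 → |Θ x| < Real.pi / 2)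
    {γ : ℝ → ℂ} (hγ : IsCurve Z γ) {a b : ℝ} (hab : a < b)
    (ha : (γ a).re = 0) (ha' : ‖γ a‖ < r0) (hb : (γ b).re = 0) (hb' : ‖γ b‖ < r0) : False := by
  have hpos : ∀ x : ℂ, ‖x‖ < r0 → 0 < (Z x).re := by
    intro x hx
    rw [polar_re hZe]
    have := abs_lt.1 (hr x hx)
    exact mul_pos (hρ x) (Real.cos_pos_of_mem_Ioo ⟨this.1, this.2⟩)
  have hnear : ∀ c, ‖γ c‖ < r0 → ∃ δ > 0, ∀ t, |t - c| ≤ δ → ‖γ t‖ < r0 := by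
    intro c hc
    have h1 : ∀ᶠ t in 𝓝 c, ‖γ t‖ < r0 :=
      (hγ.continuous.norm.tendsto c).eventually (gt_mem_nhds hc)
    obtain ⟨δ, hδ, h⟩ := Metric.eventually_nhds_iff.1 h1
    refine ⟨δ / 2, by positivity, fun t ht => h ?_⟩
    rw [Real.dist_eq]; linarith
  set r1 := max ‖γ a‖ ‖γ b‖ with hr1
  have hr1' : r1 < r0 := max_lt ha' hb'
  set S : Set ℂ := {x | x.re = 0} ∩ closedBall 0 r1 with hS
  have hSc : IsClosed S :=
    (isClosed_eq Complex.continuous_re continuous_const).inter isClosed_closedBall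
  have hSn : ∀ x ∈ S, x.re = 0 ∧ ‖x‖ < r0 := by
    intro x hx
    exact ⟨hx.1, lt_of_le_of_lt (by simpa using hx.2) hr1'⟩
  have hSv : Convex ℝ S := by
    refine Convex.inter ?_ (convex_closedBall _ _)
    intro x hx y hy c d _ _ _
    have hx' : x.re = 0 := hx
    have hy' : y.re = 0 := hy
    change (c • x + d • y).re = 0
    simp [hx', hy']
  have haS : γ a ∈ S := ⟨ha, by simp [hr1]⟩
  have hbS : γ b ∈ S := ⟨hb, by simp [hr1]⟩
  obtain ⟨δ1, hδ1, hn1⟩ := hnear a ha'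
  have hp1 : ∀ t ∈ Icc a (a + δ1), 0 < (Z (γ t)).re := fun t ht =>
    hpos _ (hn1 t (abs_le.2 ⟨by linarith [ht.1], by linarith [ht.2]⟩))
  have hnot1 : ∀ t, a < t → t ≤ a + δ1 → γ t ∉ S := by
    intro t h1 h2 h3
    have := curve_inc hγ hp1 le_rfl h1 h2
    linarith [(hSn _ h3).1]
  have hb1 : a + δ1 < b := by
    by_contra h
    push Not at h
    exact hnot1 b hab h hbS
  have hcomp : IsCompact (Icc (a + δ1) b ∩ γ ⁻¹' S) :=
    isCompact_Icc.inter_right (hSc.preimage hγ.continuous)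
  obtain ⟨b1, hb1m, hmin⟩ := hcomp.exists_isLeast ⟨b, ⟨hb1.le, le_rfl⟩, hbS⟩
  have hab1 : a < b1 := by linarith [hb1m.1.1]
  have hnot : ∀ t ∈ Ioo a b1, γ t ∉ S := by
    intro t ht h
    rcases le_total t (a + δ1) with h1 | h1
    · exact hnot1 t ht.1 h1 h
    · have := hmin ⟨⟨h1, ht.2.le.trans hb1m.1.2⟩, h⟩
      linarith [ht.2]
  obtain ⟨hb1re, hb1n⟩ := hSn _ hb1m.2
  obtain ⟨δ2, hδ2, hn2⟩ := hnear b1 hb1n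
  set δ := min (min δ1 δ2) ((b1 - a) / 2) with hδ
  have hδ0 : 0 < δ := lt_min (lt_min hδ1 hδ2) (by linarith)
  have hd1 : δ ≤ δ1 := (min_le_left _ _).trans (min_le_left _ _)
  have hd2 : δ ≤ δ2 := (min_le_left _ _).trans (min_le_right _ _)
  have hd3 : δ ≤ (b1 - a) / 2 := min_le_right _ _
  refine key_first hZ.continuous hρ hΘ hZe hγ hδ0 (b := b1) (a := a) (by linarith) ha hb1re
    (hr _ ha') (hr _ hb1n) (fun t ht => hp1 t ⟨ht.1, by linarith [ht.2]⟩)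
    (fun t ht => hpos _ (hn2 t (abs_le.2 ⟨by linarith [ht.1], by linarith [ht.2]⟩))) ?_ ?_
  · intro s t h1 h2 h3 h4 h5
    have h6 := IsCurve.unique hZ hγ (hγ.shift (t - s)) (t₀ := s) (by simp [h5])
    have h7 := congrFun h6 a
    refine hnot (t - s + a) ⟨by linarith, by linarith⟩ ?_
    rw [← h7]; exact haS
  · intro s hs c d hc hd hcd h
    refine hnot s hs ?_
    rw [h, ← Complex.real_smul, ← Complex.real_smul]
    exact hSv haS hb1m.2 hc hd hcd

theorem no_return0 {Z : ℂ → ℂ} (hZ : ContDiff ℝ 1 Z) {ρ Θ : ℂ → ℝ} (hρ : ∀ x, 0 < ρ x)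
    (hΘ : Continuous Θ) (hZe : ∀ x, Z x = ρ x * Complex.exp (Θ x * I)) (h0 : Θ 0 = 0)
    {M : ℝ} (hM : ∀ x, ‖Z x‖ ≤ M) :
    ∃ r > 0, ∀ γ, IsCurve Z γ → ∀ a b, ‖γ a‖ < r → ‖γ b‖ < r → b - a ≤ 1 := by
  have hpi := Real.pi_pos
  have hM0 : 0 ≤ M := (norm_nonneg _).trans (hM 0)
  have hre0 : 0 < (Z 0).re := by rw [polar_re hZe, h0]; simpa using hρ 0
  set c0 := (Z 0).re / 2 with hc0
  have hc0p : 0 < c0 := by positivity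
  have e1 : ∀ᶠ x in 𝓝 (0:ℂ), |Θ x| < Real.pi / 2 :=
    (hΘ.abs.tendsto 0).eventually (gt_mem_nhds (by rw [h0]; simpa using hpi))
  have e2 : ∀ᶠ x in 𝓝 (0:ℂ), c0 < (Z x).re :=
    ((Complex.continuous_re.comp hZ.continuous).tendsto 0).eventually
      (lt_mem_nhds (by simp only [Function.comp]; linarith))
  obtain ⟨r0, hr0, hr⟩ := Metric.eventually_nhds_iff.1 (e1.and e2)
  simp only [dist_zero_right] at hr
  set h := min (1 / 2) (r0 / (2 * (c0 + M + 1))) with hh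
  have hh0 : 0 < h := lt_min (by norm_num) (by positivity)
  have hh1 : h ≤ 1 / 2 := min_le_left _ _
  have hh2 : c0 * h + M * h < r0 := by
    have : h ≤ r0 / (2 * (c0 + M + 1)) := min_le_right _ _
    rw [le_div_iff₀ (by positivity)] at this
    nlinarith
  refine ⟨c0 * h, by positivity, fun γ hγ a b ha hb => ?_⟩
  have slide : ∀ a, ‖γ a‖ < c0 * h → ∃ a', |a' - a| ≤ h ∧ (γ a').re = 0 ∧ ‖γ a'‖ < r0 := by
    intro a ha
    have hlip : ∀ t, |t - a| ≤ h → ‖γ t‖ < r0 := by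
      intro t ht
      have := Convex.norm_image_sub_le_of_norm_hasDerivWithin_le (s := univ) (x := a) (y := t)
        (fun t _ => (hγ t).hasDerivWithinAt) (fun t _ => hM (γ t)) convex_univ trivial trivial
      rw [Real.norm_eq_abs] at this
      have h2 : M * |t - a| ≤ M * h := by gcongr
      have h3 := norm_add_le (γ t - γ a) (γ a)
      rw [sub_add_cancel] at h3
      linarith
    have hd : ∀ t, HasDerivAt (fun t => (γ t).re) ((Z (γ t)).re) t := fun t =>
      (Complex.reCLM.hasFDerivAt.comp_hasDerivAt t (hγ t))
    have hcont : Continuous (fun t => (γ t).re) := Complex.continuous_re.comp hγ.continuous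
    have grow : ∀ s t, a - h ≤ s → s ≤ t → t ≤ a + h →
        c0 * (t - s) ≤ (γ t).re - (γ s).re := by
      intro s t h1 h2 h3
      refine Convex.mul_sub_le_image_sub_of_le_deriv (convex_Icc (a - h) (a + h))
        (f := fun t => (γ t).re) hcont.continuousOn (fun t _ => (hd t).differentiableAt.differentiableWithinAt)
        (fun u hu => ?_) s ⟨h1, h2.trans h3⟩ t ⟨h1.trans h2, h3⟩ h2
      rw [(hd u).deriv]
      have hu' := interior_subset hu
      exact (hr (hlip u (abs_le.2 ⟨by linarith [hu'.1], by linarith [hu'.2]⟩))).2.le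
    have hre : |(γ a).re| < c0 * h := (Complex.abs_re_le_norm _).trans_lt ha
    rw [abs_lt] at hre
    have g1 := grow a (a + h) (by linarith) (by linarith) le_rfl
    have g2 := grow (a - h) a le_rfl (by linarith) (by linarith)
    obtain ⟨a', ha', ha0⟩ := intermediate_value_Icc (by linarith : a - h ≤ a + h)
      hcont.continuousOn (show (0:ℝ) ∈ Icc _ _ from ⟨by linarith, by linarith⟩)
    have hab : |a' - a| ≤ h := abs_le.2 ⟨by linarith [ha'.1], by linarith [ha'.2]⟩
    exact ⟨a', hab, ha0, hlip a' hab⟩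
  obtain ⟨a', h1, h2, h3⟩ := slide a ha
  obtain ⟨b', h4, h5, h6⟩ := slide b hb
  have hΘr : ∀ x : ℂ, ‖x‖ < r0 → |Θ x| < Real.pi / 2 := fun x hx => (hr hx).1
  rcases lt_trichotomy a' b' with h7 | h7 | h7
  · exact (one_hit hZ hρ hΘ hZe hΘr hγ h7 h2 h3 h5 h6).elim
  · subst h7
    linarith [(abs_le.1 h1).2, (abs_le.1 h4).1]
  · exact (one_hit hZ hρ hΘ hZe hΘr hγ h7 h5 h6 h2 h3).elim

theorem no_return {Z : ℂ → ℂ} (hZ : ContDiff ℝ 1 Z) {ρ Θ : ℂ → ℝ} (hρ : ∀ x, 0 < ρ x)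
    (hΘ : Continuous Θ) (hZe : ∀ x, Z x = ρ x * Complex.exp (Θ x * I))
    {M : ℝ} (hM : ∀ x, ‖Z x‖ ≤ M) (p : ℂ) :
    ∃ r > 0, ∀ γ, IsCurve Z γ → ∀ a b, γ a ∈ ball p r → γ b ∈ ball p r → b - a ≤ 1 := by
  set e : ℂ := Complex.exp (Θ p * I) with he
  have hen : ‖e‖ = 1 := Complex.norm_exp_ofReal_mul_I _
  have he0 : e ≠ 0 := Complex.exp_ne_zero _
  obtain ⟨r, hr, h⟩ := no_return0 (Z := fun w => e⁻¹ * Z (p + e * w))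
    (ρ := fun w => ρ (p + e * w)) (Θ := fun w => Θ (p + e * w) - Θ p) (M := M)
    (by fun_prop) (fun x => hρ _) (by fun_prop) (fun x => by
      rw [hZe, he, ← Complex.exp_neg]
      rw [mul_left_comm, ← Complex.exp_add]
      congr 2
      push_cast; ring) (by simp) (fun x => by simpa [hen] using hM (p + e * x))
  refine ⟨r, hr, fun γ hγ a b ha hb => h (fun t => e⁻¹ * (γ t - p)) ?_ a b ?_ ?_⟩
  · intro t
    have := ((hγ t).sub_const p).const_mul e⁻¹
    simpa [mul_inv_cancel_left₀ he0] using this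
  · simpa [hen, dist_eq_norm] using ha
  · simpa [hen, dist_eq_norm] using hb

end NoReturn

section Growth
open Complex (I)
open MeasureTheory

lemma visit_int {A : Set ℝ} (hA : IsOpen A) (h : ∀ a ∈ A, ∀ b ∈ A, b - a ≤ 1) {T : ℝ}
    (hT : 0 ≤ T) : IntervalIntegrable (A.indicator (fun _ => (1:ℝ))) volume 0 T ∧
      ∫ s in (0:ℝ)..T, A.indicator (fun _ => (1:ℝ)) s ≤ 1 := by
  constructor
  · rw [intervalIntegrable_iff]
    exact IntegrableOn.indicator (by simp) hA.measurableSet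
  · rw [intervalIntegral.integral_of_le hT, integral_indicator hA.measurableSet]
    have h1 : volume A ≤ 1 := by
      refine (Real.volume_le_diam A).trans ?_
      refine Metric.ediam_le fun a ha b hb => ?_
      rw [edist_dist, Real.dist_eq]
      rw [ENNReal.ofReal_le_one, abs_le]
      constructor
      · linarith [h a ha b hb]
      · linarith [h b hb a ha]
    have h2 : (volume.restrict (Ioc 0 T)) A ≤ 1 := (Measure.restrict_apply_le _ _).trans h1
    simp only [integral_const, smul_eq_mul, mul_one, measureReal_def, Measure.restrict_apply_univ]
    exact ENNReal.toReal_le_of_le_ofReal zero_le_one (by simpa using h2)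

theorem growth {Z : ℂ → ℂ} (hZ : ContDiff ℝ 1 Z) {ρ Θ : ℂ → ℝ} (hρ : ∀ x, 0 < ρ x)
    (hΘ : Continuous Θ) (hZe : ∀ x, Z x = ρ x * Complex.exp (Θ x * I))
    {M : ℝ} (hM : ∀ x, ‖Z x‖ ≤ M) {φ : ℂ → ℝ} (hφ : ContDiff ℝ 1 φ) {R : ℝ}
    (hend : ∀ x : ℂ, R ≤ ‖x‖ → 1 / 8 ≤ fderiv ℝ φ x (Z x)) :
    ∃ B : ℝ, ∀ γ, IsCurve Z γ → ∀ T, 0 ≤ T → T / 8 - B ≤ φ (γ T) - φ (γ 0) := by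
  choose r hr hret using no_return hZ hρ hΘ hZe hM
  obtain ⟨F, -, hF⟩ := (isCompact_closedBall (0:ℂ) R).elim_nhds_subcover (fun p => ball p (r p))
    (fun p _ => ball_mem_nhds p (hr p))
  have hwc : Continuous (fun x => fderiv ℝ φ x (Z x)) :=
    (hφ.continuous_fderiv one_ne_zero).clm_apply hZ.continuous
  obtain ⟨C, hC⟩ := (isCompact_closedBall (0:ℂ) R).exists_bound_of_continuousOn hwc.continuousOn
  set C1 := |C| with hC1
  refine ⟨(1 / 8 + C1) * F.card, fun γ hγ T hT => ?_⟩
  have hd : ∀ t ∈ uIcc 0 T, HasDerivAt (fun t => φ (γ t)) (fderiv ℝ φ (γ t) (Z (γ t))) t :=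
    fun t _ => ((hφ.differentiable one_ne_zero (γ t)).hasFDerivAt.comp_hasDerivAt t (hγ t))
  have hwi : IntervalIntegrable (fun t => fderiv ℝ φ (γ t) (Z (γ t))) volume 0 T :=
    (hwc.comp hγ.continuous).intervalIntegrable _ _
  rw [← intervalIntegral.integral_eq_sub_of_hasDerivAt hd hwi]
  have hv : ∀ p, IntervalIntegrable ((γ ⁻¹' ball p (r p)).indicator (fun _ => (1:ℝ))) volume 0 T ∧
      ∫ s in (0:ℝ)..T, (γ ⁻¹' ball p (r p)).indicator (fun _ => (1:ℝ)) s ≤ 1 := fun p =>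
    visit_int (isOpen_ball.preimage hγ.continuous) (fun a ha b hb => hret p γ hγ a b ha hb) hT
  have hsi : IntervalIntegrable (fun s => ∑ p ∈ F,
      (γ ⁻¹' ball p (r p)).indicator (fun _ => (1:ℝ)) s) volume 0 T := by
    have := IntervalIntegrable.sum F (fun p _ => (hv p).1)
    have e : (fun s => ∑ p ∈ F, (γ ⁻¹' ball p (r p)).indicator (fun _ => (1:ℝ)) s) =
        ∑ p ∈ F, (γ ⁻¹' ball p (r p)).indicator (fun _ => (1:ℝ)) := by
      ext s; rw [Finset.sum_apply]
    rw [e]; exact this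
  have hpt : ∀ s ∈ Icc 0 T, 1 / 8 - (1 / 8 + C1) * ∑ p ∈ F,
      (γ ⁻¹' ball p (r p)).indicator (fun _ => (1:ℝ)) s ≤ fderiv ℝ φ (γ s) (Z (γ s)) := by
    intro s _
    have hnn : ∀ p ∈ F, 0 ≤ (γ ⁻¹' ball p (r p)).indicator (fun _ => (1:ℝ)) s := fun p _ =>
      indicator_nonneg (fun _ _ => zero_le_one) _
    have hC1n : 0 ≤ C1 := abs_nonneg _
    rcases le_total R ‖γ s‖ with h | h
    · have := hend _ h
      have : 0 ≤ (1 / 8 + C1) * ∑ p ∈ F, (γ ⁻¹' ball p (r p)).indicator (fun _ => (1:ℝ)) s :=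
        mul_nonneg (by positivity) (Finset.sum_nonneg hnn)
      linarith
    · have hmem : γ s ∈ closedBall (0:ℂ) R := by simpa using h
      obtain ⟨p, hp, hps⟩ := mem_iUnion₂.1 (hF hmem)
      have h1 : (1:ℝ) ≤ ∑ p ∈ F, (γ ⁻¹' ball p (r p)).indicator (fun _ => (1:ℝ)) s := by
        refine le_trans (le_of_eq ?_) (Finset.single_le_sum hnn hp)
        rw [indicator_of_mem]; exact hps
      have h2 := hC _ hmem
      rw [Real.norm_eq_abs] at h2
      have h3 := (abs_le.1 (h2.trans (le_abs_self C))).1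
      nlinarith
  have hmono := intervalIntegral.integral_mono_on hT
    ((intervalIntegrable_const (c := (1/8 : ℝ))).sub (hsi.const_mul (1 / 8 + C1))) hwi hpt
  refine le_trans ?_ hmono
  rw [intervalIntegral.integral_sub intervalIntegrable_const (hsi.const_mul _),
    intervalIntegral.integral_const_mul, intervalIntegral.integral_finsetSum (fun p _ => (hv p).1)]
  have h5 : ∑ p ∈ F, ∫ s in (0:ℝ)..T, (γ ⁻¹' ball p (r p)).indicator (fun _ => (1:ℝ)) s ≤
      F.card := by
    refine (Finset.sum_le_sum fun p _ => (hv p).2).trans ?_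
    simp
  have h6 : (1 / 8 + C1) * ∑ p ∈ F, ∫ s in (0:ℝ)..T,
      (γ ⁻¹' ball p (r p)).indicator (fun _ => (1:ℝ)) s ≤ (1 / 8 + C1) * F.card :=
    mul_le_mul_of_nonneg_left h5 (by positivity)
  simp only [intervalIntegral.integral_const, smul_eq_mul, sub_zero]
  linarith

end Growth

section Param
open MeasureTheory
variable {V : Type*} [NormedAddCommGroup V] [NormedSpace ℝ V] [FiniteDimensional ℝ V]

lemma param_C1 {F : V × ℝ → ℝ} (hF : ContDiff ℝ 1 F) (a b : ℝ) :
    ContDiff ℝ 1 (fun x => ∫ s in a..b, F (x, s)) := by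
  have hc : Continuous (fun p : V × ℝ => (fderiv ℝ F p).comp (ContinuousLinearMap.inl ℝ V ℝ)) :=
    (hF.continuous_fderiv one_ne_zero).clm_comp continuous_const
  have hd : ∀ x s, HasFDerivAt (fun x => F (x, s))
      ((fderiv ℝ F (x, s)).comp (ContinuousLinearMap.inl ℝ V ℝ)) x := fun x s =>
    (hF.differentiable one_ne_zero (x, s)).hasFDerivAt.comp x (hasFDerivAt_prodMk_left x s)
  have hD : ∀ x, HasFDerivAt (fun x => ∫ s in a..b, F (x, s))
      (∫ s in a..b, (fderiv ℝ F (x, s)).comp (ContinuousLinearMap.inl ℝ V ℝ)) x := by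
    intro x
    obtain ⟨C, hC⟩ := ((isCompact_closedBall x 1).prod
      (isCompact_uIcc (a := a) (b := b))).exists_bound_of_continuousOn hc.continuousOn
    refine intervalIntegral.hasFDerivAt_integral_of_dominated_of_fderiv_le (𝕜 := ℝ) (μ := volume)
      (bound := fun _ => C) (F := fun x s => F (x, s))
      (F' := fun x s => (fderiv ℝ F (x, s)).comp (ContinuousLinearMap.inl ℝ V ℝ))
      (closedBall_mem_nhds x one_pos)
      (Eventually.of_forall fun y => ?_) ?_ ?_ ?_ intervalIntegrable_const ?_
    · exact (hF.continuous.comp (by fun_prop : Continuous fun s : ℝ => (y, s))).aestronglyMeasurable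
    · exact (hF.continuous.comp (by fun_prop : Continuous fun s : ℝ => (x, s))).intervalIntegrable _ _
    · exact (hc.comp (by fun_prop : Continuous fun s : ℝ => (x, s))).aestronglyMeasurable
    · exact Eventually.of_forall fun t ht y hy => hC (y, t) ⟨hy, uIoc_subset_uIcc ht⟩
    · exact Eventually.of_forall fun t _ y _ => hd y t
  rw [contDiff_one_iff_fderiv]
  refine ⟨fun x => (hD x).differentiableAt, ?_⟩
  rw [show fderiv ℝ (fun x => ∫ s in a..b, F (x, s)) = _ from funext fun x => (hD x).fderiv]
  exact intervalIntegral.continuous_parametric_intervalIntegral_of_continuous' (μ := volume)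
    (f := fun x s => (fderiv ℝ F (x, s)).comp (ContinuousLinearMap.inl ℝ V ℝ)) hc a b

end Param

section S6
open Complex (I)

lemma avg {Z : ℂ → ℂ} (hZ : ContDiff ℝ 1 Z) {ρ Θ : ℂ → ℝ} (hρ : ∀ x, 0 < ρ x)
    (hΘ : Continuous Θ) (hZe : ∀ x, Z x = ρ x * Complex.exp (Θ x * I))
    {M : ℝ} (hM : ∀ x, ‖Z x‖ ≤ M) {φ : ℂ → ℝ} (hφ : ContDiff ℝ 1 φ) {R : ℝ}
    (hend : ∀ x : ℂ, R ≤ ‖x‖ → 1 / 8 ≤ fderiv ℝ φ x (Z x)) :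
    ∃ κ τ : ℂ → ℝ, ContDiff ℝ 1 κ ∧ ContDiff ℝ 1 τ ∧ (∀ x, 1 / 16 ≤ κ x) ∧
      ∀ x, fderiv ℝ τ x (Z x) = κ x := by
  obtain ⟨B, hB⟩ := growth hZ hρ hΘ hZe hM hφ hend
  obtain ⟨Φ, h0, hcur, hgrp, hΦ⟩ := exists_flow hZ hM
  set T := 16 * |B| + 1 with hT
  have hTp : 0 < T := by positivity
  have hTB : 16 * B ≤ T := by have := le_abs_self B; linarith
  have hφΦ : ContDiff ℝ 1 (fun p : ℂ × ℝ => φ (Φ p.1 p.2)) := hφ.comp hΦ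
  have hκ : ContDiff ℝ 1 (fun x => (φ (Φ x T) - φ x) / T) := by
    have : ContDiff ℝ 1 (fun x => φ (Φ x T)) :=
      hφΦ.comp (by fun_prop : ContDiff ℝ 1 fun x : ℂ => (x, T))
    fun_prop
  have hτ : ContDiff ℝ 1 (fun x => (∫ s in (0:ℝ)..T, φ (Φ x s)) / T) :=
    (param_C1 hφΦ 0 T).div_const _
  refine ⟨_, _, hκ, hτ, fun x => ?_, fun x => ?_⟩
  · have := hB _ (hcur x) T hTp.le
    rw [h0] at this
    rw [le_div_iff₀ hTp]; linarith
  · have h1 : HasDerivAt (fun h => (∫ s in (0:ℝ)..T, φ (Φ (Φ x h) s)) / T)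
        (fderiv ℝ (fun x => (∫ s in (0:ℝ)..T, φ (Φ x s)) / T) x (Z x)) 0 := by
      have hc := hcur x 0
      rw [h0] at hc
      have hf := (hτ.differentiable one_ne_zero x).hasFDerivAt
      have hf' : HasFDerivAt (fun x => (∫ s in (0:ℝ)..T, φ (Φ x s)) / T)
        (fderiv ℝ (fun x => (∫ s in (0:ℝ)..T, φ (Φ x s)) / T) x) (Φ x 0) := by rw [h0]; exact hf
      exact hf'.comp_hasDerivAt 0 hc
    have hcont : Continuous (fun s => φ (Φ x s)) := hφ.continuous.comp (hcur x).continuous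
    have h2 : HasDerivAt (fun h => (∫ s in (0:ℝ)..T, φ (Φ (Φ x h) s)) / T)
        ((φ (Φ x T) - φ x) / T) 0 := by
      have e : (fun h => (∫ s in (0:ℝ)..T, φ (Φ (Φ x h) s)) / T) =
          fun h => ((∫ s in (0:ℝ)..(T + h), φ (Φ x s)) - ∫ s in (0:ℝ)..h, φ (Φ x s)) / T := by
        ext h
        congr 1
        rw [intervalIntegral.integral_interval_sub_left (hcont.intervalIntegrable _ _)
          (hcont.intervalIntegrable _ _)]
        simp only [hgrp]
        rw [intervalIntegral.integral_comp_add_left (fun s => φ (Φ x s)) h]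
        simp [add_comm]
      rw [e]
      have hA : HasDerivAt (fun h => ∫ s in (0:ℝ)..(T + h), φ (Φ x s)) (φ (Φ x T)) 0 := by
        have h3 : HasDerivAt (fun u => ∫ s in (0:ℝ)..u, φ (Φ x s)) (φ (Φ x (T + 0))) (T + 0) :=
          intervalIntegral.integral_hasDerivAt_right (hcont.intervalIntegrable _ _)
            hcont.aestronglyMeasurable.stronglyMeasurableAtFilter hcont.continuousAt
        simpa using h3.comp_const_add T 0
      have hB : HasDerivAt (fun h => ∫ s in (0:ℝ)..h, φ (Φ x s)) (φ (Φ x 0)) 0 :=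
          intervalIntegral.integral_hasDerivAt_right (hcont.intervalIntegrable _ _)
            hcont.aestronglyMeasurable.stronglyMeasurableAtFilter hcont.continuousAt
      rw [h0] at hB
      exact (hA.sub hB).div_const T
    exact h1.unique h2

end S6

section S7

lemma fam {Z : ℂ → ℂ} (hZ : ContDiff ℝ 1 Z) {M : ℝ} (hM : ∀ x, ‖Z x‖ ≤ M) {τ : ℂ → ℝ}
    (hτ : ContDiff ℝ 1 τ) (hτZ : ∀ x, fderiv ℝ τ x (Z x) = 1) :
    ∃ (G : ℝ → ℂ → ℝ) (G' : ℝ → ℂ → (ℂ →L[ℝ] ℝ)), (∀ t x, HasFDerivAt (G t) (G' t x) x) ∧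
      Continuous (fun p : ℝ × ℂ => G' p.1 p.2) ∧
      ∀ t x, G' t x (Z (t • x)) = 1 + ‖x‖ ^ 2 := by
  -- the flow on `ℝ × ℂ`
  obtain ⟨Ψ, h0, hcur, hgrp, hΨ⟩ := exists_flow (V := ℝ × ℂ) (Z := fun p => (0, Z (p.1 • p.2)))
    (M := M) (by
      have : ContDiff ℝ 1 (fun p : ℝ × ℂ => p.1 • p.2) := contDiff_fst.smul contDiff_snd
      exact contDiff_const.prodMk (hZ.comp this))
    (fun x => by
      rw [Prod.norm_def]
      exact max_le (by simpa using (norm_nonneg _).trans (hM 0)) (hM _))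
  have hfst : ∀ p h, (Ψ p h).1 = p.1 := by
    intro p h
    have hd : ∀ s, HasDerivAt (fun s => (Ψ p s).1) 0 s := fun s => by
      exact (hasFDerivAt_fst (𝕜 := ℝ) (E := ℝ) (F := ℂ)).comp_hasDerivAt s (hcur p s)
    have := is_const_of_deriv_eq_zero (fun s => (hd s).differentiableAt) (fun s => (hd s).deriv) h 0
    simpa [h0] using this
  set P : ℝ → ℂ → ℝ → ℂ := fun t x s => (Ψ (t, x) s).2 with hP
  have hΨP : ∀ t x s, Ψ (t, x) s = (t, P t x s) := fun t x s => Prod.ext (hfst _ _) rfl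
  have hP0 : ∀ t x, P t x 0 = x := fun t x => by simp [hP, h0]
  have hPd : ∀ t x s, HasDerivAt (P t x) (Z (t • P t x s)) s := fun t x s => by
    have := hasFDerivAt_snd.comp_hasDerivAt s (hcur (t, x) s)
    rw [hΨP] at this
    simpa [hP, Function.comp_def] using this
  have hPg : ∀ t x s u, P t (P t x s) u = P t x (s + u) := fun t x s u => by
    have := hgrp (t, x) s u
    rw [hΨP t x s] at this
    exact congrArg Prod.snd this
  -- the rescaled `τ`
  set σ : ℝ → ℂ → ℝ := fun t x => ∫ s in (0:ℝ)..1, fderiv ℝ τ ((s * t) • x) x with hσ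
  have hτc := hτ.continuous_fderiv one_ne_zero
  have hτd := hτ.differentiable one_ne_zero
  have hσc : Continuous (fun p : ℝ × ℂ => σ p.1 p.2) := by
    refine intervalIntegral.continuous_parametric_intervalIntegral_of_continuous' (μ := MeasureTheory.volume)
      (f := fun (p : ℝ × ℂ) s => fderiv ℝ τ ((s * p.1) • p.2) p.2) ?_ 0 1
    exact (hτc.comp (by fun_prop : Continuous fun q : (ℝ × ℂ) × ℝ => (q.2 * q.1.1) • q.1.2)).clm_apply
      (by fun_prop : Continuous fun q : (ℝ × ℂ) × ℝ => q.1.2)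
  have hσ0 : ∀ x, σ 0 x = fderiv ℝ τ 0 x := fun x => by simp [hσ]
  have hσt : ∀ t, t ≠ 0 → ∀ x, σ t x = (τ (t • x) - τ 0) / t := by
    intro t ht x
    have hd : ∀ s ∈ uIcc (0:ℝ) 1, HasDerivAt (fun s : ℝ => τ ((s * t) • x) / t)
        (fderiv ℝ τ ((s * t) • x) x) s := by
      intro s _
      have h1 : HasDerivAt (fun s : ℝ => (s * t) • x) (t • x) s := by
        simpa using ((hasDerivAt_id s).mul_const t).smul_const x
      have h2 := ((hτd ((s * t) • x)).hasFDerivAt.comp_hasDerivAt s h1).div_const t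
      rw [map_smul, smul_eq_mul, mul_div_cancel_left₀ _ ht] at h2
      exact h2
    simp only [hσ]
    rw [intervalIntegral.integral_eq_sub_of_hasDerivAt hd]
    · simp [sub_div]
    · exact ((hτc.comp (by fun_prop : Continuous fun s : ℝ => (s * t) • x)).clm_apply
        continuous_const).intervalIntegrable _ _
  have hσd : ∀ t x, HasFDerivAt (σ t) (fderiv ℝ τ (t • x)) x := by
    intro t x
    by_cases ht : t = 0
    · subst ht
      rw [show σ 0 = fun x => fderiv ℝ τ 0 x from funext hσ0, zero_smul]
      exact (fderiv ℝ τ 0).hasFDerivAt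
    · rw [show σ t = fun x => (τ (t • x) - τ 0) / t from funext (hσt t ht)]
      have h1 : HasFDerivAt (fun x : ℂ => t • x) (t • ContinuousLinearMap.id ℝ ℂ) x :=
        (hasFDerivAt_id x).const_smul t
      have h2 := (((hτd (t • x)).hasFDerivAt.comp x h1).sub_const (τ 0)).mul_const t⁻¹
      refine h2.congr_fderiv ?_ |>.congr_of_eventuallyEq (Eventually.of_forall fun y => ?_)
      · ext v <;> simp [ht]
      · simp [div_eq_mul_inv]
  have hσP : ∀ t x h, σ t (P t x h) = σ t x + h := by
    intro t x h
    have hd : ∀ s, HasDerivAt (fun s => σ t (P t x s) - s) 0 s := fun s => by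
      have := ((hσd t (P t x s)).comp_hasDerivAt s (hPd t x s)).sub (hasDerivAt_id s)
      rw [hτZ, sub_self] at this
      exact this
    have := is_const_of_deriv_eq_zero (fun s => (hd s).differentiableAt) (fun s => (hd s).deriv) h 0
    simp only [hP0] at this
    linarith
  -- the function `H`
  set H : ℝ × ℝ × ℂ → ℝ := fun p => ∫ s in (0:ℝ)..1,
    p.2.1 * (1 + ‖(Ψ (p.1, p.2.2) (-p.2.1 + p.2.1 * s)).2‖ ^ 2) with hH
  have hHC : ContDiff ℝ 1 H := by
    refine param_C1 (F := fun q : (ℝ × ℝ × ℂ) × ℝ =>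
      q.1.2.1 * (1 + ‖(Ψ (q.1.1, q.1.2.2) (-q.1.2.1 + q.1.2.1 * q.2)).2‖ ^ 2)) ?_ 0 1
    have h1 : ContDiff ℝ 1 (fun q : (ℝ × ℝ × ℂ) × ℝ =>
        (((q.1.1, q.1.2.2), -q.1.2.1 + q.1.2.1 * q.2) : (ℝ × ℂ) × ℝ)) := by fun_prop
    have h2 := contDiff_snd.comp (hΨ.comp h1)
    have h3 := (contDiff_const (c := (1:ℝ))).add (h2.norm_sq ℝ)
    exact (by fun_prop : ContDiff ℝ 1 fun q : (ℝ × ℝ × ℂ) × ℝ => q.1.2.1).mul h3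
  have hPc : ∀ t x, Continuous (P t x) := fun t x =>
    continuous_iff_continuousAt.2 fun s => (hPd t x s).continuousAt
  have hHI : ∀ t r x, H (t, r, x) = ∫ v in (-r)..0, (1 + ‖P t x v‖ ^ 2) := by
    intro t r x
    simp only [hH]
    rw [intervalIntegral.integral_const_mul]
    rw [intervalIntegral.mul_integral_comp_add_mul (f := fun v => (1 + ‖(Ψ (t, x) v).2‖ ^ 2))]
    simp [hP]
  have hGd : ∀ t x, HasFDerivAt (fun x => H (t, σ t x, x))
      ((fderiv ℝ H (t, σ t x, x)).comp ((0 : ℂ →L[ℝ] ℝ).prod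
        ((fderiv ℝ τ (t • x)).prod (ContinuousLinearMap.id ℝ ℂ)))) x := by
    intro t x
    exact (hHC.differentiable one_ne_zero _).hasFDerivAt.comp x
      ((hasFDerivAt_const t x).prodMk ((hσd t x).prodMk (hasFDerivAt_id x)))
  refine ⟨fun t x => H (t, σ t x, x), _, hGd, ?_, fun t x => ?_⟩
  · refine Continuous.clm_comp ?_ ?_
    · exact (hHC.continuous_fderiv one_ne_zero).comp
        (continuous_fst.prodMk (hσc.prodMk continuous_snd))
    · have h1 : Continuous fun p : ℝ × ℂ => fderiv ℝ τ (p.1 • p.2) :=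
        hτc.comp (by fun_prop)
      have h2 : Continuous fun p : ℝ × ℂ => (fderiv ℝ τ (p.1 • p.2)).prod (ContinuousLinearMap.id ℝ ℂ) :=
        (ContinuousLinearMap.prodₗᵢ (𝕜 := ℝ) (E := ℂ) (F := ℝ) (G := ℂ) ℝ).continuous.comp
          (h1.prodMk continuous_const)
      exact (ContinuousLinearMap.prodₗᵢ (𝕜 := ℝ) (E := ℂ) (F := ℝ) (G := ℝ × ℂ) ℝ).continuous.comp
        (continuous_const.prodMk h2)
  · have h1 := (hGd t (P t x 0)).comp_hasDerivAt 0 (hPd t x 0)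
    simp only [hP0] at h1
    have hcont : Continuous fun v => (1 + ‖P t x v‖ ^ 2) := by
      have := hPc t x; fun_prop
    have e : (fun x => H (t, σ t x, x)) ∘ (P t x) =
        fun h => ∫ v in (-(σ t x))..h, (1 + ‖P t x v‖ ^ 2) := by
      ext h
      simp only [Function.comp_def, hHI, hσP, hPg]
      rw [intervalIntegral.integral_comp_add_left (fun v => (1 + ‖P t x v‖ ^ 2)) h]
      congr 1 <;> ring
    rw [e] at h1
    have h2 : HasDerivAt (fun h => ∫ v in (-(σ t x))..h, (1 + ‖P t x v‖ ^ 2)) (1 + ‖P t x 0‖ ^ 2) 0 :=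
      intervalIntegral.integral_hasDerivAt_right (hcont.intervalIntegrable _ _)
            hcont.aestronglyMeasurable.stronglyMeasurableAtFilter hcont.continuousAt
    rw [hP0] at h2
    exact h1.unique h2

end S7

section HomSec

/-- Exact continuous one-forms. -/
def Ex (D : ℂ → (ℂ →L[ℝ] ℝ)) : Prop := Continuous D ∧ ∃ φ : ℂ → ℝ, ∀ x, HasFDerivAt φ (D x) x

/-- Homotopy of exact one-forms, proper. -/
def Hom (D E : ℂ → (ℂ →L[ℝ] ℝ)) : Prop :=
  ∃ (G : ℝ → ℂ → ℝ) (G' : ℝ → ℂ → (ℂ →L[ℝ] ℝ)), (∀ t x, HasFDerivAt (G t) (G' t x) x) ∧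
    Continuous (fun p : ℝ × ℂ => G' p.1 p.2) ∧
    (∀ C, ∃ R, ∀ t x, R ≤ ‖x‖ → C ≤ ‖G' t x‖) ∧ (∀ t ≤ 0, G' t = D) ∧ (∀ t, 1 ≤ t → G' t = E)

/-- Rapid increase along a vector field. -/
def Up (D : ℂ → (ℂ →L[ℝ] ℝ)) (Z : ℂ → ℂ) : Prop :=
  ∀ C, ∃ R, ∀ x, R ≤ ‖x‖ → C * ‖Z x‖ ≤ D x (Z x)

def cl (t : ℝ) : ℝ := max 0 (min t 1)
lemma cl_cont : Continuous cl := by unfold cl; fun_prop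
lemma cl_nonneg (t : ℝ) : 0 ≤ cl t := le_max_left _ _
lemma cl_le (t : ℝ) : cl t ≤ 1 := max_le zero_le_one (min_le_right _ _)
lemma cl_of_le {t : ℝ} (h : t ≤ 0) : cl t = 0 := by
  unfold cl; rw [min_eq_left (by linarith), max_eq_left h]
lemma cl_of_ge {t : ℝ} (h : 1 ≤ t) : cl t = 1 := by
  unfold cl; rw [min_eq_right h, max_eq_right zero_le_one]

lemma Hom.mk' {D E : ℂ → (ℂ →L[ℝ] ℝ)} (G : ℝ → ℂ → ℝ) (G' : ℝ → ℂ → (ℂ →L[ℝ] ℝ))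
    (h1 : ∀ t x, HasFDerivAt (G t) (G' t x) x)
    (h2 : Continuous (fun p : ℝ × ℂ => G' p.1 p.2))
    (h3 : ∀ C, ∃ R, ∀ t, 0 ≤ t → t ≤ 1 → ∀ x, R ≤ ‖x‖ → C ≤ ‖G' t x‖)
    (h4 : G' 0 = D) (h5 : G' 1 = E) : Hom D E := by
  refine ⟨fun t => G (cl t), fun t => G' (cl t), fun t => h1 _,
    h2.comp ((cl_cont.comp continuous_fst).prodMk continuous_snd), fun C => ?_, ?_, ?_⟩
  · obtain ⟨R, hR⟩ := h3 C
    exact ⟨R, fun t x hx => hR _ (cl_nonneg t) (cl_le t) x hx⟩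
  · intro t ht; simp only [cl_of_le ht, h4]
  · intro t ht; simp only [cl_of_ge ht, h5]

lemma Hom.symm {D E : ℂ → (ℂ →L[ℝ] ℝ)} (h : Hom D E) : Hom E D := by
  obtain ⟨G, G', h1, h2, h3, h4, h5⟩ := h
  refine ⟨fun t => G (1 - t), fun t => G' (1 - t), fun t => h1 _,
    h2.comp ((continuous_const.sub continuous_fst).prodMk continuous_snd), fun C => ?_, ?_, ?_⟩
  · obtain ⟨R, hR⟩ := h3 C
    exact ⟨R, fun t x hx => hR _ x hx⟩
  · intro t ht; exact h5 _ (by linarith)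
  · intro t ht; exact h4 _ (by linarith)

lemma Hom.exr {D E : ℂ → (ℂ →L[ℝ] ℝ)} (h : Hom D E) : Ex E := by
  obtain ⟨G, G', h1, h2, h3, h4, h5⟩ := h
  rw [← h5 1 le_rfl]
  exact ⟨h2.comp (continuous_const.prodMk continuous_id), G 1, h1 1⟩

lemma Hom.trans {D E F : ℂ → (ℂ →L[ℝ] ℝ)} (h : Hom D E) (h' : Hom E F) : Hom D F := by
  obtain ⟨hEc, ψ, hψ⟩ := h.exr
  obtain ⟨G, G', h1, h2, h3, h4, h5⟩ := h
  obtain ⟨K, K', k1, k2, k3, k4, k5⟩ := h'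
  refine ⟨fun t x => G (2 * t) x + K (2 * t - 1) x - ψ x,
    fun t x => G' (2 * t) x + K' (2 * t - 1) x - E x,
    fun t x => ((h1 _ x).add (k1 _ x)).sub (hψ x), ?_, fun C => ?_, fun t ht => ?_, fun t ht => ?_⟩
  · refine ((h2.comp (g := fun p : ℝ × ℂ => G' p.1 p.2) (f := fun p : ℝ × ℂ => (2 * p.1, p.2))
      (by fun_prop)).add (k2.comp (g := fun p : ℝ × ℂ => K' p.1 p.2)
      (f := fun p : ℝ × ℂ => (2 * p.1 - 1, p.2)) (by fun_prop))).sub (hEc.comp continuous_snd)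
  · obtain ⟨R, hR⟩ := h3 C
    obtain ⟨R', hR'⟩ := k3 C
    refine ⟨max R R', fun t x hx => ?_⟩
    rcases le_total (2 * t) 1 with ht | ht
    · beta_reduce
      rw [k4 (2 * t - 1) (by linarith), add_sub_cancel_right]
      exact hR _ _ ((le_max_left _ _).trans hx)
    · beta_reduce
      rw [h5 (2 * t) (by linarith), add_sub_cancel_left]
      exact hR' _ _ ((le_max_right _ _).trans hx)
  · ext1 x
    beta_reduce
    rw [k4 (2 * t - 1) (by linarith), add_sub_cancel_right, h4 _ (by linarith)]
  · ext1 x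
    beta_reduce
    rw [h5 (2 * t) (by linarith), add_sub_cancel_left, k5 _ (by linarith)]

lemma Hom.line {D E : ℂ → (ℂ →L[ℝ] ℝ)} (hD : Ex D) (hE : Ex E) {Z : ℂ → ℂ} (hZ : ∀ x, Z x ≠ 0)
    (hDZ : Up D Z) (hEZ : Up E Z) : Hom D E := by
  obtain ⟨hDc, φ, hφ⟩ := hD
  obtain ⟨hEc, ψ, hψ⟩ := hE
  refine Hom.mk' (fun t x => (1 - t) * φ x + t * ψ x) (fun t x => (1 - t) • D x + t • E x)
    (fun t x => ((hφ x).const_mul _).add ((hψ x).const_mul _)) ?_ ?_ ?_ ?_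
  · have h1 := hDc.comp (continuous_snd (X := ℝ))
    have h2 := hEc.comp (continuous_snd (X := ℝ))
    exact ((continuous_const.sub continuous_fst).smul h1).add (continuous_fst.smul h2)
  · intro C
    obtain ⟨R, hR⟩ := hDZ C
    obtain ⟨R', hR'⟩ := hEZ C
    refine ⟨max R R', fun t ht0 ht1 x hx => ?_⟩
    have a1 := hR x ((le_max_left _ _).trans hx)
    have a2 := hR' x ((le_max_right _ _).trans hx)
    have a3 := (le_abs_self _).trans (((1 - t) • D x + t • E x).le_opNorm (Z x))
    simp only [add_apply, smul_apply, smul_eq_mul] at a3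
    have a4 : 0 < ‖Z x‖ := norm_pos_iff.2 (hZ x)
    refine le_of_mul_le_mul_right ?_ a4
    refine le_trans ?_ a3
    nlinarith
  · ext1 x; simp
  · ext1 x; simp

lemma Up.scale {D : ℂ → (ℂ →L[ℝ] ℝ)} {Z : ℂ → ℂ} (h : Up D Z) {c : ℂ → ℝ} (hc : ∀ x, 0 ≤ c x) :
    Up D (fun x => c x • Z x) := by
  intro C
  obtain ⟨R, hR⟩ := h C
  refine ⟨R, fun x hx => ?_⟩
  have := mul_le_mul_of_nonneg_left (hR x hx) (hc x)
  simp only [map_smul, smul_eq_mul, norm_smul, Real.norm_eq_abs, abs_of_nonneg (hc x)]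
  linarith

/-- From vector field data to a homotopy to a normal form. -/
lemma link {Z : ℂ → ℂ} (hZ : ContDiff ℝ 1 Z) {ρ Θ : ℂ → ℝ} (hρ : ∀ x, 0 < ρ x)
    (hΘ : Continuous Θ) (hZe : ∀ x, Z x = ρ x * Complex.exp (Θ x * Complex.I)) (hΘ0 : Θ 0 = 0)
    {M : ℝ} (hM : ∀ x, ‖Z x‖ ≤ M) {φ : ℂ → ℝ} (hφ : ContDiff ℝ 1 φ) {R : ℝ}
    (hend : ∀ x : ℂ, R ≤ ‖x‖ → 1 / 8 ≤ fderiv ℝ φ x (Z x)) (hup : Up (fderiv ℝ φ) Z) :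
    ∃ D, Hom (fderiv ℝ φ) D ∧ Up D (fun _ => 1) := by
  obtain ⟨κ, τ, hκ, hτ, hκ1, hτκ⟩ := avg hZ hρ hΘ hZe hM hφ hend
  have hκp : ∀ x, 0 < κ x := fun x => lt_of_lt_of_le (by norm_num) (hκ1 x)
  set Z' : ℂ → ℂ := fun x => (κ x)⁻¹ • Z x with hZ'
  have hZ'C : ContDiff ℝ 1 Z' := (hκ.inv fun x => (hκp x).ne').smul hZ
  have hM0 : 0 ≤ M := (norm_nonneg _).trans (hM 0)
  have hZ'M : ∀ x, ‖Z' x‖ ≤ 16 * M := by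
    intro x
    simp only [hZ', norm_smul, norm_inv, Real.norm_eq_abs, abs_of_pos (hκp x)]
    have : (κ x)⁻¹ ≤ 16 := by
      rw [inv_le_comm₀ (hκp x) (by norm_num)]; have := hκ1 x; norm_num at this ⊢; exact this
    exact mul_le_mul this (hM x) (norm_nonneg _) (by norm_num)
  have hZ0 : ∀ x, Z x ≠ 0 := fun x => by
    rw [hZe]; exact mul_ne_zero (by exact_mod_cast (hρ x).ne') (Complex.exp_ne_zero _)
  obtain ⟨G, G', hG, hGc, hGZ⟩ := fam hZ'C hZ'M hτ (fun x => by
    simp only [hZ', map_smul, smul_eq_mul, hτκ]; exact inv_mul_cancel₀ (hκp x).ne')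
  have hMp : 0 < 16 * M + 1 := by linarith
  have hupt : ∀ C, ∃ R, ∀ t x, R ≤ ‖x‖ → C * ‖Z' (t • x)‖ ≤ G' t x (Z' (t • x)) := by
    intro C
    refine ⟨|C| * (16 * M + 1) + 1, fun t x hx => ?_⟩
    rw [hGZ]
    have h1 : C * ‖Z' (t • x)‖ ≤ |C| * (16 * M + 1) :=
      mul_le_mul (le_abs_self C) ((hZ'M _).trans (by linarith)) (norm_nonneg _) (abs_nonneg _)
    nlinarith [norm_nonneg x]
  have hZ'0 : ∀ x, Z' x ≠ 0 := fun x => smul_ne_zero (inv_ne_zero (hκp x).ne') (hZ0 x)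
  have hH01 : Hom (G' 1) (G' 0) := by
    refine (Hom.mk' G G' hG hGc (fun C => ?_) rfl rfl).symm
    obtain ⟨R, hR⟩ := hupt C
    refine ⟨R, fun t _ _ x hx => ?_⟩
    refine le_of_mul_le_mul_right ((hR t x hx).trans ?_) (norm_pos_iff.2 (hZ'0 (t • x)))
    exact (le_abs_self _).trans ((G' t x).le_opNorm _)
  have hU1 : Up (G' 1) Z' := by
    intro C
    obtain ⟨R, hR⟩ := hupt C
    refine ⟨R, fun x hx => ?_⟩
    have := hR 1 x hx
    rwa [one_smul] at this
  have hφex : Ex (fderiv ℝ φ) := ⟨hφ.continuous_fderiv one_ne_zero, φ, fun x =>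
    (hφ.differentiable one_ne_zero x).hasFDerivAt⟩
  refine ⟨G' 0, (Hom.line hφex ⟨hGc.comp (continuous_const.prodMk continuous_id), G 1, hG 1⟩ hZ'0
    (hup.scale fun x => (inv_pos.2 (hκp x)).le) hU1).trans hH01, fun C => ?_⟩
  obtain ⟨R, hR⟩ := hupt C
  refine ⟨R, fun x hx => ?_⟩
  have := hR 0 x hx
  have e' : Z' ((0:ℝ) • x) = ((κ 0)⁻¹ * ρ 0) • (1:ℂ) := by
    simp [hZ', hZe, hΘ0]
  have hc : 0 < (κ 0)⁻¹ * ρ 0 := mul_pos (inv_pos.2 (hκp 0)) (hρ 0)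
  rw [e', map_smul, norm_smul, Real.norm_eq_abs, abs_of_pos hc, smul_eq_mul] at this
  refine le_of_mul_le_mul_left ?_ hc
  linarith

end HomSec

section S2
open Complex (I)
open scoped ComplexConjugate

lemma cutoff {R₀ : ℝ} (hR₀ : 0 ≤ R₀) {θ : ℂ → ℝ} (hθ : ContinuousOn θ {x | R₀ ≤ ‖x‖}) :
    ∃ θ' : ℂ → ℝ, Continuous θ' ∧ θ' 0 = 0 ∧ ∀ x, R₀ + 2 ≤ ‖x‖ → θ' x = θ x := by
  refine ⟨fun x => cl (‖x‖ - R₀ - 1) * θ x, ?_, ?_, fun x hx => ?_⟩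
  · rw [continuous_iff_continuousAt]
    intro x
    rcases lt_or_ge ‖x‖ (R₀ + 1) with h | h
    · have : (fun x => cl (‖x‖ - R₀ - 1) * θ x) =ᶠ[𝓝 x] fun _ => 0 := by
        filter_upwards [(isOpen_lt continuous_norm continuous_const).mem_nhds h] with y hy
        have hy' : ‖y‖ < R₀ + 1 := hy
        rw [cl_of_le (by linarith), zero_mul]
      exact continuousAt_const.congr this.symm
    · have h1 : ContinuousAt θ x := hθ.continuousAt (by
        filter_upwards [(isOpen_lt continuous_const continuous_norm).mem_nhds
          (show R₀ < ‖x‖ by linarith)] with y hy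
        exact le_of_lt hy)
      exact ((cl_cont.comp (by fun_prop : Continuous fun x : ℂ => ‖x‖ - R₀ - 1)).continuousAt).mul h1
  · simp only [norm_zero]; rw [cl_of_le (by linarith), zero_mul]
  · beta_reduce
    rw [cl_of_ge (by linarith), one_mul]

lemma normal {φ : ℂ → ℝ} (hφ : ContDiff ℝ 1 φ)
    (hco : ∀ C, ∃ R, ∀ x : ℂ, R ≤ ‖x‖ → C ≤ ‖fderiv ℝ φ x‖) {F : ℂ → ℂ}
    (hF : ∀ x v, fderiv ℝ φ x v = (conj (F x) * v).re) {R₀ : ℝ} (hR₀ : 0 ≤ R₀) {θ : ℂ → ℝ}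
    (hθ : ContinuousOn θ {x | R₀ ≤ ‖x‖})
    (hθF : ∀ x, R₀ ≤ ‖x‖ → F x = ‖F x‖ * Complex.exp (θ x * I)) :
    ∃ D, Hom (fderiv ℝ φ) D ∧ Up D (fun _ => 1) := by
  obtain ⟨θ', hθ'c, hθ'0, hθ'e⟩ := cutoff hR₀ hθ
  obtain ⟨Θ, hΘs, hΘ, hΘsupp⟩ := hθ'c.exists_contDiff_approx (1 : ℕ∞) (ε := fun _ => 1)
    continuous_const (fun _ => one_pos)
  have hΘ0 : Θ 0 = 0 := by
    by_contra h
    exact hΘsupp (Function.mem_support.2 h) hθ'0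
  have hNc : Continuous (fun x => ‖fderiv ℝ φ x‖ + 2) :=
    (hφ.continuous_fderiv one_ne_zero).norm.add continuous_const
  obtain ⟨m, hms, hm, -⟩ := hNc.exists_contDiff_approx (1 : ℕ∞) (ε := fun _ => 1)
    continuous_const (fun _ => one_pos)
  have hm' : ∀ x, ‖fderiv ℝ φ x‖ + 1 ≤ m x ∧ m x ≤ ‖fderiv ℝ φ x‖ + 3 := by
    intro x
    have := hm x
    rw [Real.dist_eq, abs_lt] at this
    constructor <;> linarith [this.1, this.2]
  have hmp : ∀ x, 1 ≤ m x := fun x => by linarith [(hm' x).1, norm_nonneg (fderiv ℝ φ x)]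
  have hmp0 : ∀ x, 0 < m x := fun x => by linarith [hmp x]
  set Z : ℂ → ℂ := fun x => (((m x)⁻¹ : ℝ) : ℂ) * Complex.exp (Θ x * I) with hZ
  have hZn : ∀ x, ‖Z x‖ = (m x)⁻¹ := fun x => by
    simp only [hZ, norm_mul, Complex.norm_exp_ofReal_mul_I, mul_one, Complex.norm_real, norm_inv,
      Real.norm_eq_abs, abs_of_pos (hmp0 x)]
  have hZC : ContDiff ℝ 1 Z := by
    have h1 : ContDiff ℝ 1 (fun x => (((m x)⁻¹ : ℝ) : ℂ)) :=
      Complex.ofRealCLM.contDiff.comp (hms.inv fun x => (hmp0 x).ne')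
    have h2 : ContDiff ℝ 1 (fun x => (Θ x : ℂ) * I) :=
      (Complex.ofRealCLM.contDiff.comp hΘs).mul contDiff_const
    exact h1.mul h2.cexp
  have hFN : ∀ x, ‖fderiv ℝ φ x‖ ≤ ‖F x‖ := fun x => by
    refine ContinuousLinearMap.opNorm_le_bound _ (norm_nonneg _) fun v => ?_
    rw [hF]
    refine (Complex.abs_re_le_norm _).trans ?_
    rw [norm_mul, RCLike.norm_conj]
  have hval : ∀ x, R₀ + 2 ≤ ‖x‖ → ‖fderiv ℝ φ x‖ / 2 * ‖Z x‖ ≤ fderiv ℝ φ x (Z x) := by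
    intro x hx
    have h1 : |Θ x - θ x| < 1 := by
      have := hΘ x; rwa [hθ'e x hx, Real.dist_eq] at this
    have h2 : fderiv ℝ φ x (Z x) = ‖F x‖ * (m x)⁻¹ * Real.cos (Θ x - θ x) := by
      rw [hF, hθF x (by linarith)]
      simp only [hZ, map_mul, Complex.conj_ofReal, ← Complex.exp_conj, Complex.conj_I]
      have : ∀ a b c d : ℂ, a * b * (c * d) = a * c * (b * d) := fun a b c d => by ring
      rw [this, ← Complex.exp_add]
      rw [show (θ x : ℂ) * -I + Θ x * I = ((Θ x - θ x : ℝ) : ℂ) * I by push_cast; ring]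
      rw [← Complex.ofReal_mul, Complex.re_ofReal_mul, Complex.exp_ofReal_mul_I_re]
      simp
    have h3 : 1 / 2 ≤ Real.cos (Θ x - θ x) := by
      have := Real.one_sub_sq_div_two_le_cos (x := Θ x - θ x)
      have h4 : (Θ x - θ x) ^ 2 ≤ 1 := by
        rw [sq_le_one_iff_abs_le_one]; exact h1.le
      linarith
    rw [h2, hZn]
    have h5 : 0 < (m x)⁻¹ := inv_pos.2 (hmp0 x)
    have h6 : ‖fderiv ℝ φ x‖ * (1 / 2) ≤ ‖F x‖ * Real.cos (Θ x - θ x) :=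
      mul_le_mul (hFN x) h3 (by norm_num) (norm_nonneg _)
    nlinarith
  obtain ⟨R₁, hR₁⟩ := hco 1
  refine link hZC (ρ := fun x => (m x)⁻¹) (fun x => inv_pos.2 (hmp0 x)) hΘs.continuous
    (fun x => rfl) hΘ0 (M := 1) (fun x => ?_) hφ (R := max R₁ (R₀ + 2)) (fun x hx => ?_) (fun C => ?_)
  · rw [hZn]; exact inv_le_one_of_one_le₀ (hmp x)
  · refine le_trans ?_ (hval x ((le_max_right _ _).trans hx))
    rw [hZn, ← div_eq_mul_inv, le_div_iff₀ (hmp0 x)]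
    have := hR₁ x ((le_max_left _ _).trans hx)
    linarith [(hm' x).2]
  · obtain ⟨R₂, hR₂⟩ := hco (2 * C)
    refine ⟨max R₂ (R₀ + 2), fun x hx => ?_⟩
    refine le_trans ?_ (hval x ((le_max_right _ _).trans hx))
    have := hR₂ x ((le_max_left _ _).trans hx)
    exact mul_le_mul_of_nonneg_right (by linarith) (norm_nonneg _)

end S2

section EndLift
open Complex (I)

lemma end_lift {F : ℂ → ℂ} {R₀ : ℝ} (hR₀ : 0 < R₀) (hF : ContinuousOn F {x | R₀ ≤ ‖x‖})
    (hF0 : ∀ x, R₀ ≤ ‖x‖ → F x ≠ 0) :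
    ∃ (k : ℤ) (η : ℂ → ℂ), ContinuousOn η {x | x ≠ 0} ∧
      ∀ x, R₀ ≤ ‖x‖ → F x = x ^ k * Complex.exp (η x) := by
  set q : ℂ → ℂ := fun w => Complex.exp ((max w.re (Real.log R₀) : ℝ) + w.im * I) with hq
  have hqn : ∀ w, R₀ ≤ ‖q w‖ := fun w => by
    simp only [hq, Complex.norm_exp]
    rw [← Real.log_le_iff_le_exp hR₀]
    simp
  have hqc : Continuous q := by
    simp only [hq]
    have : Continuous fun w : ℂ => ((max w.re (Real.log R₀) : ℝ) : ℂ) :=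
      Complex.continuous_ofReal.comp (Complex.continuous_re.max continuous_const)
    have h2 : Continuous fun w : ℂ => ((w.im : ℝ) : ℂ) :=
      Complex.continuous_ofReal.comp Complex.continuous_im
    exact Complex.continuous_exp.comp (this.add (h2.mul continuous_const))
  obtain ⟨L, hLc, hL⟩ := exists_lift (g := fun w => F (q w)) (hF.comp_continuous hqc hqn)
    (fun w => hF0 _ (hqn w))
  have hqp : ∀ w, q (w + 2 * Real.pi * I) = q w := fun w => by
    simp only [hq]
    rw [Complex.exp_eq_exp_iff_exists_int]
    refine ⟨1, ?_⟩
    simp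
    ring
  have hintg : ∀ w, ∃ n : ℤ, L (w + 2 * Real.pi * I) = L w + n * (2 * Real.pi * I) := fun w => by
    rw [← Complex.exp_eq_exp_iff_exists_int, hL, hL, hqp]
  obtain ⟨k, hk⟩ := hintg 0
  have hper : ∀ w, L (w + 2 * Real.pi * I) = L w + k * (2 * Real.pi * I) := by
    intro w
    have hc := int_const (X := ℂ) isPreconnected_univ
      (g := fun w => (L (w + 2 * Real.pi * I) - L w).im) (by
        have : Continuous fun w => L (w + 2 * Real.pi * I) := hLc.comp (by fun_prop)
        exact (Complex.continuous_im.comp (this.sub hLc)).continuousOn)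
      (fun w _ => by
        obtain ⟨n, hn⟩ := hintg w
        exact ⟨n, by rw [hn]; simp; ring⟩) (mem_univ w) (mem_univ 0)
    obtain ⟨n, hn⟩ := hintg w
    rw [hn, hk] at hc
    simp at hc
    rw [hn]
    rw [hc]
  set N : ℂ → ℂ := fun w => L w - k * w with hN
  have hNc : Continuous N := by fun_prop
  have hNp : ∀ w, N (w + 2 * Real.pi * I) = N w := fun w => by simp only [hN, hper]; ring
  have hNp' : ∀ (n : ℕ) w, N (w + n * (2 * Real.pi * I)) = N w := by
    intro n
    induction n with
    | zero => intro w; simp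
    | succ n ih =>
      intro w
      rw [← ih w, ← hNp (w + n * (2 * Real.pi * I))]; congr 1; push_cast; ring
  have hNz : ∀ (n : ℤ) w, N (w + n * (2 * Real.pi * I)) = N w := by
    intro n w
    obtain ⟨m, rfl | rfl⟩ := n.eq_nat_or_neg
    · exact_mod_cast hNp' m w
    · have := hNp' m (w + ((-(m:ℤ) : ℤ) : ℂ) * (2 * Real.pi * I))
      rw [← this]; congr 1; push_cast; ring
  have hNe : ∀ a b, Complex.exp a = Complex.exp b → N a = N b := by
    intro a b h
    obtain ⟨n, hn⟩ := Complex.exp_eq_exp_iff_exists_int.1 h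
    rw [hn, hNz]
  refine ⟨k, fun x => N (Complex.log x), ?_, ?_⟩
  · intro x hx
    have hx' : x ≠ 0 := hx
    refine ContinuousAt.continuousWithinAt ?_
    rcases Complex.mem_slitPlane_or_neg_mem_slitPlane hx' with h | h
    · exact hNc.continuousAt.comp (continuousAt_clog h)
    · have e : (fun x => N (Complex.log x)) =ᶠ[𝓝 x]
          fun x => N (Complex.log (-x) + Real.pi * I) := by
        filter_upwards [isOpen_ne.mem_nhds hx'] with y hy
        refine hNe _ _ ?_
        rw [Complex.exp_log hy, Complex.exp_add, Complex.exp_log (neg_ne_zero.2 hy), Complex.exp_pi_mul_I]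
        ring
      refine ContinuousAt.congr ?_ e.symm
      have h1 : ContinuousAt (fun x => Complex.log (-x)) x :=
        (continuousAt_clog h).comp continuous_neg.continuousAt
      exact ContinuousAt.comp (g := N) hNc.continuousAt (h1.add continuousAt_const)
  · intro x hx
    have hx0 : x ≠ 0 := norm_pos_iff.1 (hR₀.trans_le hx)
    have hqx : q (Complex.log x) = x := by
      simp only [hq]
      rw [max_eq_left, Complex.re_add_im, Complex.exp_log hx0]
      rw [Complex.log_re]; exact Real.log_le_log hR₀ hx
    have := hL (Complex.log x)
    rw [hqx] at this
    rw [← this]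
    simp only [hN]
    nth_rewrite 2 [← Complex.exp_log hx0]
    rw [← Complex.exp_int_mul, ← Complex.exp_add]
    congr 1; ring

end EndLift

section Deg
open Complex (I)
open scoped ComplexConjugate

/-- The identification of the plane with the complex numbers. -/
def eq2 : ℂ ≃ₗᵢ[ℝ] Euc 2 := Complex.orthonormalBasisOneI.repr

def dC (D : DegreeTheory 2) (f : ℂ → ℂ) (Ω : Set ℂ) : ℤ :=
  D.deg (fun y => eq2 (f (eq2.symm y))) (eq2.symm ⁻¹' Ω)

variable (D : DegreeTheory 2)

lemma pre_open {Ω : Set ℂ} (h : IsOpen Ω) : IsOpen (eq2.symm ⁻¹' Ω) :=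
  h.preimage eq2.symm.continuous

lemma pre_ball (c : ℂ) (R : ℝ) : eq2.symm ⁻¹' (ball c R) = ball (eq2 c) R := by
  rw [LinearIsometryEquiv.preimage_ball]; simp

lemma pre_closure (Ω : Set ℂ) : closure (eq2.symm ⁻¹' Ω) = eq2.symm ⁻¹' (closure Ω) :=
  (eq2.symm.toHomeomorph.preimage_closure Ω).symm

lemma pre_frontier (Ω : Set ℂ) : frontier (eq2.symm ⁻¹' Ω) = eq2.symm ⁻¹' (frontier Ω) :=
  (eq2.symm.toHomeomorph.preimage_frontier Ω).symm

lemma pre_bdd {Ω : Set ℂ} (h : Bornology.IsBounded Ω) : Bornology.IsBounded (eq2.symm ⁻¹' Ω) :=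
  eq2.symm.antilipschitz.isBounded_preimage h

lemma dC_id {R : ℝ} (hR : 0 < R) : dC D (fun z => z) (ball 0 R) = 1 := by
  have := D.normalized (eq2.symm ⁻¹' (ball 0 R)) (pre_open isOpen_ball) (pre_bdd isBounded_ball)
    (by simp [hR])
  unfold dC
  rw [show (fun y => eq2 (eq2.symm y)) = id by ext1 y; simp]
  exact this

lemma dC_add {f : ℂ → ℂ} (hf : Continuous f) {Ω Ω₁ Ω₂ : Set ℂ} (h : IsOpen Ω)
    (hb : Bornology.IsBounded Ω) (h1 : IsOpen Ω₁) (h2 : IsOpen Ω₂) (h1s : Ω₁ ⊆ Ω) (h2s : Ω₂ ⊆ Ω)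
    (hd : Disjoint Ω₁ Ω₂) (hn : ∀ x ∈ closure Ω, f x = 0 → x ∈ Ω₁ ∪ Ω₂) :
    dC D f Ω = dC D f Ω₁ + dC D f Ω₂ := by
  refine D.additive _ _ _ _ (pre_open h) (pre_bdd hb) (pre_open h1) (pre_open h2)
    (preimage_mono h1s) (preimage_mono h2s) (hd.preimage _) ?_ ?_
  · exact (eq2.continuous.comp (hf.comp eq2.symm.continuous)).continuousOn
  · rintro y ⟨hy, hy'⟩ h0
    rw [pre_closure] at hy
    refine hy' (hn _ hy ?_)
    simpa using h0

lemma dC_hom {h : ℝ → ℂ → ℂ} (hc : Continuous (fun p : ℝ × ℂ => h p.1 p.2)) {c : ℂ} {R : ℝ}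
    (hR : 0 < R)
    (hn : ∀ t ∈ Icc (0:ℝ) 1, ∀ x, ‖x - c‖ = R → h t x ≠ 0) {f g : ℂ → ℂ} (h0 : ∀ x, h 0 x = f x)
    (h1 : ∀ x, h 1 x = g x) :
    dC D f (ball c R) = dC D g (ball c R) := by
  have := D.homotopyInv (fun t y => eq2 (h t (eq2.symm y))) (eq2.symm ⁻¹' (ball c R))
    (pre_open isOpen_ball) (pre_bdd isBounded_ball) ?_ ?_
  · simp only [h0, h1] at this
    exact this
  · have h2 : Continuous fun p : ℝ × Euc 2 => (p.1, eq2.symm p.2) :=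
      continuous_fst.prodMk (eq2.symm.continuous.comp continuous_snd)
    exact (eq2.continuous.comp (hc.comp h2)).continuousOn
  · intro t ht y hy h0
    rw [pre_frontier, frontier_ball _ hR.ne'] at hy
    refine hn t ht (eq2.symm y) ?_ (by simpa using h0)
    exact mem_sphere_iff_norm.1 hy

lemma dC_empty {f : ℂ → ℂ} (hf : Continuous f) : dC D f ∅ = 0 := by
  have := dC_add D hf (Ω := ∅) (Ω₁ := ∅) (Ω₂ := ∅) isOpen_empty Bornology.isBounded_empty
    isOpen_empty isOpen_empty subset_rfl subset_rfl disjoint_bot_left (by simp)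
  omega

lemma dC_exc {f : ℂ → ℂ} (hf : Continuous f) {Ω Ω₁ : Set ℂ} (h : IsOpen Ω)
    (hb : Bornology.IsBounded Ω) (h1 : IsOpen Ω₁) (h1s : Ω₁ ⊆ Ω)
    (hn : ∀ x ∈ closure Ω, f x = 0 → x ∈ Ω₁) : dC D f Ω = dC D f Ω₁ := by
  rw [dC_add D hf h hb h1 isOpen_empty h1s (empty_subset _) disjoint_bot_right
    (by simpa using hn), dC_empty D hf, add_zero]

lemma dC_nonvan {f : ℂ → ℂ} (hf : Continuous f) {c : ℂ} {R : ℝ} (hn : ∀ x, f x ≠ 0) :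
    dC D f (ball c R) = 0 := by
  rw [dC_exc D hf isOpen_ball isBounded_ball isOpen_empty (empty_subset _)
    (fun x _ h => absurd h (hn x)), dC_empty D hf]

/-- multiplication by a nonvanishing constant -/
lemma dC_const {f : ℂ → ℂ} (hf : Continuous f) {c : ℂ} {R : ℝ} (hR : 0 < R)
    (hn : ∀ x, ‖x - c‖ = R → f x ≠ 0) {ζ : ℂ → ℂ} (hζ : Continuous ζ) :
    dC D (fun x => f x * Complex.exp (ζ x)) (ball c R) = dC D f (ball c R) := by
  refine (dC_hom D (h := fun t x => f x * Complex.exp (t * ζ x)) (by fun_prop) hR ?_ ?_ ?_).symm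
  · intro t _ x hx
    exact mul_ne_zero (hn x hx) (Complex.exp_ne_zero _)
  · intro x; simp
  · intro x; simp

lemma dC_cmul {f : ℂ → ℂ} (hf : Continuous f) {c : ℂ} {R : ℝ} (hR : 0 < R)
    (hn : ∀ x, ‖x - c‖ = R → f x ≠ 0) {w : ℂ} (hw : w ≠ 0) :
    dC D (fun x => f x * w) (ball c R) = dC D f (ball c R) := by
  have := dC_const D hf hR hn (ζ := fun _ => Complex.log w) continuous_const
  rwa [Complex.exp_log hw] at this

lemma dC_mul {M ℓ : ℂ → ℂ} (hM : Continuous M) (hM0 : ∀ z, M z = 0 → z = 0) (hℓ : Continuous ℓ)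
    (hℓn : ∀ z, ‖ℓ z‖ = ‖z‖) {R : ℝ} (hR : 0 < R) :
    dC D (fun z => M z * ℓ z) (ball 0 R) = dC D M (ball 0 R) + dC D ℓ (ball 0 R) := by
  have hℓ0 : ∀ z, ℓ z = 0 → z = 0 := fun z h => by
    have := hℓn z; rw [h, norm_zero] at this; exact norm_eq_zero.1 this.symm
  set a : ℂ := ((R / 2 : ℝ) : ℂ) with ha
  have han : ‖a‖ = R / 2 := by
    rw [ha, Complex.norm_real, Real.norm_eq_abs, abs_of_pos (by linarith)]
  have htan : ∀ t ∈ Icc (0:ℝ) 1, ‖(t:ℂ) * a‖ ≤ R / 2 := by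
    intro t ht
    rw [norm_mul, han, Complex.norm_real, Real.norm_eq_abs, abs_of_nonneg ht.1]
    nlinarith [ht.2]
  have hR4 : 0 < R / 4 := by linarith
  have sub1 : ball (0:ℂ) (R / 4) ⊆ ball 0 R := ball_subset_ball (by linarith)
  have sub2 : ball a (R / 4) ⊆ ball 0 R := by
    refine ball_subset_ball' ?_
    rw [dist_zero_right, han]; linarith
  have hdis : Disjoint (ball (0:ℂ) (R / 4)) (ball a (R / 4)) := by
    refine ball_disjoint_ball ?_
    rw [dist_zero_left, han]; linarith
  have s1 : dC D (fun z => M z * ℓ z) (ball 0 R) = dC D (fun z => M z * ℓ (z - a)) (ball 0 R) := by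
    refine dC_hom D (h := fun t z => M z * ℓ (z - t * a)) (by fun_prop) hR ?_ (by simp) (by simp)
    intro t ht x hx h
    rw [sub_zero] at hx
    rcases mul_eq_zero.1 h with h | h
    · have := hM0 _ h; rw [this, norm_zero] at hx; linarith
    · have := hℓ0 _ h
      rw [sub_eq_zero] at this
      have h2 := htan t ht
      rw [← this, hx] at h2; linarith
  have hMℓ : Continuous (fun z => M z * ℓ (z - a)) := by fun_prop
  have hℓa : Continuous (fun z => ℓ (z - a)) := by fun_prop
  have s2 := dC_add D hMℓ isOpen_ball isBounded_ball isOpen_ball isOpen_ball sub1 sub2 hdis (by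
    intro x _ h
    rcases mul_eq_zero.1 h with h | h
    · left; rw [hM0 _ h]; exact mem_ball_self hR4
    · right; rw [sub_eq_zero.1 (hℓ0 _ h)]; exact mem_ball_self hR4)
  have hMs : ∀ x, ‖x - 0‖ = R / 4 → M x ≠ 0 := by
    intro x hx h
    rw [sub_zero] at hx
    have := hM0 _ h; rw [this, norm_zero] at hx; linarith
  have s3 : dC D (fun z => M z * ℓ (z - a)) (ball 0 (R / 4)) = dC D M (ball 0 R) := by
    have e1 : dC D (fun z => M z * ℓ (z - a)) (ball 0 (R / 4)) =
        dC D (fun z => M z * ℓ (- a)) (ball 0 (R / 4)) := by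
      refine dC_hom D (h := fun t z => M z * ℓ ((1 - t) * z - a)) (by fun_prop) hR4 ?_ (by simp)
        (by simp)
      intro t ht x hx
      refine mul_ne_zero (hMs x hx) fun h => ?_
      have := sub_eq_zero.1 (hℓ0 _ h)
      have h2 := han
      rw [sub_zero] at hx
      rw [← this, norm_mul, hx, ← Complex.ofReal_one, ← Complex.ofReal_sub, Complex.norm_real,
        Real.norm_eq_abs, abs_of_nonneg (by linarith [ht.2])] at h2
      nlinarith [ht.1]
    rw [e1, dC_cmul D hM hR4 hMs, dC_exc D hM isOpen_ball isBounded_ball isOpen_ball sub1]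
    · intro x _ h; rw [hM0 _ h]; exact mem_ball_self hR4
    · intro h
      have := hℓn (-a)
      rw [h, norm_zero, norm_neg, han] at this; linarith
  have s4 : dC D (fun z => M z * ℓ (z - a)) (ball a (R / 4)) = dC D ℓ (ball 0 R) := by
    have hls : ∀ x, ‖x - a‖ = R / 4 → ℓ (x - a) ≠ 0 := by
      intro x hx h
      have := hℓ0 _ h; rw [this, norm_zero] at hx; linarith
    have e1 : dC D (fun z => M z * ℓ (z - a)) (ball a (R / 4)) =
        dC D (fun z => ℓ (z - a) * M a) (ball a (R / 4)) := by
      refine dC_hom D (h := fun t z => M (a + (1 - t) * (z - a)) * ℓ (z - a)) (by fun_prop) hR4 ?_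
        (by simp) (by intro x; simp [mul_comm])
      intro t ht x hx
      refine mul_ne_zero (fun h => ?_) (hls x hx)
      have := eq_neg_of_add_eq_zero_left (hM0 _ h)
      have h2 := han
      rw [this, norm_neg, norm_mul, hx, ← Complex.ofReal_one, ← Complex.ofReal_sub, Complex.norm_real,
        Real.norm_eq_abs, abs_of_nonneg (by linarith [ht.2])] at h2
      nlinarith [ht.1]
    rw [e1, dC_cmul D hℓa hR4 hls, ← dC_exc D hℓa isOpen_ball isBounded_ball isOpen_ball sub2]
    · symm
      refine dC_hom D (h := fun t z => ℓ (z - t * a)) (by fun_prop) hR ?_ (by simp) (by simp)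
      intro t ht x hx h
      rw [sub_zero] at hx
      have := sub_eq_zero.1 (hℓ0 _ h)
      have h2 := htan t ht
      rw [← this, hx] at h2; linarith
    · intro x _ h; rw [sub_eq_zero.1 (hℓ0 _ h)]; exact mem_ball_self hR4
    · intro h
      have := hM0 _ h
      rw [this, norm_zero] at han; linarith
  rw [s1, s2, s3, s4]

/-- mixed monomials -/
def mon (i j : ℕ) (z : ℂ) : ℂ := z ^ i * conj z ^ j

lemma mon_cont (i j : ℕ) : Continuous (mon i j) := by
  unfold mon; have := Complex.continuous_conj; fun_prop

lemma mon_zero {i j : ℕ} {z : ℂ} (h : mon i j z = 0) : z = 0 := by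
  unfold mon at h
  rcases mul_eq_zero.1 h with h | h
  · exact eq_zero_of_pow_eq_zero h
  · simpa using eq_zero_of_pow_eq_zero h

lemma dC_mon_aux {R : ℝ} (hR : 0 < R) (i j : ℕ) :
    dC D (mon i j) (ball 0 R) = i + j * dC D conj (ball 0 R) := by
  have h00 : dC D (mon 0 0) (ball 0 R) = 0 := dC_nonvan D (mon_cont 0 0) (by simp [mon])
  have hi : dC D (mon i 0) (ball 0 R) = i := by
    induction i with
    | zero => simpa using h00
    | succ i ih =>
      have := dC_mul D (mon_cont i 0) (fun z => mon_zero) (ℓ := fun z => z) continuous_id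
        (fun z => rfl) hR
      rw [ih, dC_id D hR] at this
      push_cast
      rw [← this]; congr 1; ext1 z; simp [mon, pow_succ]
  induction j with
  | zero => simpa using hi
  | succ j ih =>
    have := dC_mul D (mon_cont i j) (fun z => mon_zero) (ℓ := conj) Complex.continuous_conj
        (fun z => RCLike.norm_conj z) hR
    rw [ih] at this
    push_cast
    rw [add_mul, one_mul, ← add_assoc, ← this]; congr 1; ext1 z; simp [mon, pow_succ, mul_assoc]

lemma dC_mon {R : ℝ} (hR : 0 < R) (i j : ℕ) : dC D (mon i j) (ball 0 R) = i - j := by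
  have h11 := dC_mon_aux D hR 1 1
  have h0 : dC D (mon 1 1) (ball 0 R) = dC D (fun _ => 1) (ball 0 R) := by
    refine dC_hom D (h := fun t z => (1 - t) * mon 1 1 z + t) ?_ hR ?_ (by simp) (by simp)
    · have := mon_cont 1 1; fun_prop
    · intro t ht x hx
      rw [sub_zero] at hx
      have e : mon 1 1 x = ((R ^ 2 : ℝ) : ℂ) := by
        simp only [mon, pow_one, Complex.mul_conj, Complex.normSq_eq_norm_sq, hx]
      rw [e]
      have : (1 - t) * R ^ 2 + t ≠ 0 := by
        have h1 : 0 < R ^ 2 := by positivity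
        rcases eq_or_lt_of_le ht.2 with h | h
        · rw [h]; norm_num
        · have : 0 < (1 - t) * R ^ 2 := mul_pos (by linarith) h1
          linarith [ht.1]
      exact_mod_cast this
  rw [dC_nonvan D continuous_const (by simp)] at h0
  rw [h0] at h11
  have : dC D conj (ball 0 R) = -1 := by push_cast at h11; linarith
  rw [dC_mon_aux D hR, this]; ring

lemma deg_zero_k {F : ℂ → ℂ} (hF : Continuous F) {R : ℝ} (hR : 0 < R)
    (hF0 : ∀ x, ‖x‖ = R → F x ≠ 0) {k : ℤ} {η : ℂ → ℂ} (hη : ContinuousOn η {x | x ≠ 0})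
    (hFη : ∀ x, ‖x‖ = R → F x = x ^ k * Complex.exp (η x)) : dC D F (ball 0 R) = k := by
  obtain ⟨g, hg⟩ := ContinuousMap.exists_restrict_eq (isClosed_sphere (x := (0:ℂ)) (ε := R))
    (⟨(sphere (0:ℂ) R).domRestrict η, (hη.mono fun x hx => by
      rintro rfl; simp at hx; linarith).domRestrict⟩ : C(sphere (0:ℂ) R, ℂ))
  have hgη : ∀ x, ‖x‖ = R → g x = η x := fun x hx => by
    have := congrArg (fun f => f ⟨x, by simpa using hx⟩) hg
    exact this
  obtain ⟨i, j, ζ, hζ, hk, he⟩ : ∃ (i j : ℕ) (ζ : ℂ → ℂ), Continuous ζ ∧ (i:ℤ) - j = k ∧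
      ∀ x, ‖x‖ = R → F x = mon i j x * Complex.exp (ζ x) := by
    obtain ⟨n, rfl | rfl⟩ := k.eq_nat_or_neg
    · refine ⟨n, 0, g, g.continuous, by simp, fun x hx => ?_⟩
      rw [hFη x hx, hgη x hx]; simp [mon]
    · refine ⟨0, n, fun x => g x + n * (-Real.log (R ^ 2) : ℝ), by fun_prop, by simp, fun x hx => ?_⟩
      have hx0 : x ≠ 0 := by rintro rfl; simp at hx; linarith
      beta_reduce
      rw [hFη x hx, hgη x hx, Complex.exp_add, Complex.exp_nat_mul, ← Complex.ofReal_exp, Real.exp_neg,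
        Real.exp_log (by positivity)]
      have h1 : x * conj x = ((R ^ 2 : ℝ) : ℂ) := by
        rw [Complex.mul_conj, Complex.normSq_eq_norm_sq, hx]
      have h2 : x⁻¹ = conj x * ((R ^ 2)⁻¹ : ℝ) := by
        rw [Complex.ofReal_inv, ← h1]
        have : conj x ≠ 0 := by simpa using hx0
        field_simp
      rw [zpow_neg, zpow_natCast, ← inv_pow, h2, mul_pow]
      simp only [mon, pow_zero, one_mul]
      ring
  have hc : Continuous fun x => mon i j x * Complex.exp (ζ x) := by
    have := mon_cont i j; fun_prop
  have e1 : dC D F (ball 0 R) = dC D (fun x => mon i j x * Complex.exp (ζ x)) (ball 0 R) := by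
    refine dC_hom D (h := fun t x => (1 - t) * F x + t * (mon i j x * Complex.exp (ζ x))) ?_ hR ?_
      (by simp) (by simp)
    · have := mon_cont i j; fun_prop
    · intro t ht x hx
      rw [sub_zero] at hx
      rw [← he x hx]
      have := hF0 x hx
      intro h
      apply this
      linear_combination h
  rw [e1, dC_const D (mon_cont i j) hR _ hζ, dC_mon D hR, hk]
  intro x hx h
  rw [sub_zero] at hx
  rw [mon_zero h, norm_zero] at hx; linarith

end Deg

section Final
open Complex (I)
open scoped ComplexConjugate RealInnerProductSpace

variable (D : DegreeTheory 2)

lemma dC_conv (f : Euc 2 → Euc 2) (R : ℝ) :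
    dC D (fun x => eq2.symm (f (eq2 x))) (ball 0 R) = D.deg f (ball 0 R) := by
  unfold dC
  rw [pre_ball]
  simp

lemma grad_cont {φ : Euc 2 → ℝ} (hφ : ContDiff ℝ 1 φ) {f : Euc 2 → Euc 2}
    (hf : ∀ x, gradient φ x = f x) : Continuous f := by
  rw [show f = gradient φ from funext fun x => (hf x).symm]
  exact (InnerProductSpace.toDual ℝ (Euc 2)).symm.continuous.comp (hφ.continuous_fderiv one_ne_zero)

lemma coe_of_proper {f : Euc 2 → Euc 2} (hf : IsProper f) (C : ℝ) :
    ∃ R, ∀ x, R ≤ ‖x‖ → C ≤ ‖f x‖ := by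
  obtain ⟨R, hR⟩ := (hf _ (isCompact_closedBall 0 C)).isBounded.exists_norm_le
  refine ⟨R + 1, fun x hx => ?_⟩
  by_contra h
  have := hR x (by simpa using (not_le.1 h).le)
  linarith

lemma fd_comp {φ : Euc 2 → ℝ} (hφ : ContDiff ℝ 1 φ) (x : ℂ) :
    HasFDerivAt (fun x => φ (eq2 x))
      ((fderiv ℝ φ (eq2 x)).comp (eq2.toContinuousLinearEquiv : ℂ →L[ℝ] Euc 2)) x :=
  (hφ.differentiable one_ne_zero _).hasFDerivAt.comp x
    (eq2.toContinuousLinearEquiv : ℂ →L[ℝ] Euc 2).hasFDerivAt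

lemma main_one {φ : Euc 2 → ℝ} (hφ : ContDiff ℝ 1 φ) {f : Euc 2 → Euc 2}
    (hf : ∀ x, gradient φ x = f x) (hp : IsProper f) (hdeg : HasDeg D f 0) :
    ∃ E, Hom (fderiv ℝ (fun x => φ (eq2 x))) E ∧ Up E (fun _ => 1) := by
  have hfc := grad_cont hφ hf
  have hfd : ∀ x v, fderiv ℝ (fun x => φ (eq2 x)) x v = (conj (eq2.symm (f (eq2 x))) * v).re := by
    intro x v
    rw [(fd_comp hφ x).fderiv]
    have h1 : fderiv ℝ φ (eq2 x) (eq2 v) = ⟪f (eq2 x), eq2 v⟫ := by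
      rw [← hf]; unfold gradient; simp
    have h2 : ⟪f (eq2 x), eq2 v⟫ = ⟪eq2.symm (f (eq2 x)), v⟫ := by
      rw [← eq2.inner_map_map (eq2.symm (f (eq2 x))) v, LinearIsometryEquiv.apply_symm_apply]
    have h3 : (⟪eq2.symm (f (eq2 x)), v⟫ : ℝ) = (conj (eq2.symm (f (eq2 x))) * v).re := by
      rw [Complex.inner, mul_comm]
    exact h1.trans (h2.trans h3)
  have hnorm : ∀ x, ‖fderiv ℝ (fun x => φ (eq2 x)) x‖ = ‖f (eq2 x)‖ := by
    intro x
    rw [(fd_comp hφ x).fderiv, ← hf]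
    unfold gradient
    rw [LinearIsometryEquiv.norm_map]
    exact ContinuousLinearMap.opNorm_comp_linearIsometryEquiv _ eq2
  have hco : ∀ C, ∃ R, ∀ x : ℂ, R ≤ ‖x‖ → C ≤ ‖fderiv ℝ (fun x => φ (eq2 x)) x‖ := by
    intro C
    obtain ⟨R, hR⟩ := coe_of_proper hp C
    exact ⟨R, fun x hx => by rw [hnorm]; exact hR _ (by simpa using hx)⟩
  obtain ⟨R₁, hR₁⟩ := coe_of_proper hp 1
  set R₀ := max R₁ 1 with hR₀
  have hR₀p : 0 < R₀ := lt_of_lt_of_le one_pos (le_max_right _ _)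
  set F : ℂ → ℂ := fun x => eq2.symm (f (eq2 x)) with hF
  have hFc : Continuous F := eq2.symm.continuous.comp (hfc.comp eq2.continuous)
  have hf0 : ∀ y, R₀ ≤ ‖y‖ → f y ≠ 0 := fun y hy h => by
    have := hR₁ y ((le_max_left _ _).trans hy)
    rw [h, norm_zero] at this; linarith
  have hF0 : ∀ x, R₀ ≤ ‖x‖ → F x ≠ 0 := fun x hx => by
    simpa [hF] using hf0 (eq2 x) (by simpa using hx)
  obtain ⟨k, η, hη, hFη⟩ := end_lift hR₀p hFc.continuousOn hF0
  have hk := deg_zero_k D hFc hR₀p (fun x hx => hF0 x hx.ge) hη (fun x hx => hFη x hx.ge)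
  rw [dC_conv, hdeg R₀ hR₀p (fun y hy => by
    by_contra h
    exact hf0 y (by simpa using h) hy)] at hk
  subst hk
  refine normal (hφ.comp eq2.toContinuousLinearEquiv.contDiff) hco hfd hR₀p.le
    (θ := fun x => (η x).im) ?_ fun x hx => ?_
  · refine Complex.continuous_im.comp_continuousOn (hη.mono fun x hx => ?_)
    have hx' : R₀ ≤ ‖x‖ := hx
    exact norm_pos_iff.1 (hR₀p.trans_le hx')
  · have := hFη x hx
    rw [zpow_zero, one_mul] at this
    have h2 : F x = ‖F x‖ * Complex.exp ((η x).im * I) := by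
      rw [this, Complex.norm_exp, Complex.ofReal_exp, ← Complex.exp_add, Complex.re_add_im]
    exact h2

lemma hom_conv {φ ψ : Euc 2 → ℝ} (hφ : ContDiff ℝ 1 φ) (hψ : ContDiff ℝ 1 ψ) {f g : Euc 2 → Euc 2}
    (hf : ∀ x, gradient φ x = f x) (hg : ∀ x, gradient ψ x = g x)
    (h : Hom (fderiv ℝ (fun x => φ (eq2 x))) (fderiv ℝ (fun x => ψ (eq2 x)))) :
    ProperGradientHomotopic f g := by
  obtain ⟨G, G', h1, h2, h3, h4, h5⟩ := h
  set L : Euc 2 →L[ℝ] ℂ := (eq2.symm.toContinuousLinearEquiv : Euc 2 →L[ℝ] ℂ) with hL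
  set K : ℝ → Euc 2 → (Euc 2 →L[ℝ] ℝ) := fun t y => (G' t (eq2.symm y)).comp L with hK
  have hKc : Continuous fun p : ℝ × Euc 2 => K p.1 p.2 := by
    have : Continuous fun p : ℝ × Euc 2 => (p.1, eq2.symm p.2) :=
      continuous_fst.prodMk (eq2.symm.continuous.comp continuous_snd)
    exact (h2.comp this).clm_comp continuous_const
  have hKd : ∀ t y, HasFDerivAt (fun y => G t (eq2.symm y)) (K t y) y := fun t y =>
    (h1 t _).comp y L.hasFDerivAt
  have hKn : ∀ t y, ‖K t y‖ = ‖G' t (eq2.symm y)‖ := fun t y =>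
    ContinuousLinearMap.opNorm_comp_linearIsometryEquiv _ eq2.symm
  set H : ℝ → Euc 2 → Euc 2 := fun t y => (InnerProductSpace.toDual ℝ (Euc 2)).symm (K t y) with hH
  have hHc : Continuous fun p : ℝ × Euc 2 => H p.1 p.2 :=
    (InnerProductSpace.toDual ℝ (Euc 2)).symm.continuous.comp hKc
  have hend : ∀ {φ : Euc 2 → ℝ}, ContDiff ℝ 1 φ → ∀ {f : Euc 2 → Euc 2},
      (∀ x, gradient φ x = f x) → ∀ t, G' t = fderiv ℝ (fun x => φ (eq2 x)) → H t = f := by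
    intro φ hφ f hf t ht
    ext1 y
    rw [← hf]
    simp only [hH, hK]
    unfold gradient
    congr 1
    rw [ht, (fd_comp hφ _).fderiv]
    ext v
    simp [hL]
  refine ⟨H, ⟨hHc.continuousOn, fun t _ => ?_, fun S hS => ?_⟩, hend hφ hf 0 (h4 0 le_rfl),
    hend hψ hg 1 (h5 1 le_rfl)⟩
  · refine ⟨fun y => G t (eq2.symm y), ?_, fun y => (hKd t y).hasGradientAt.gradient⟩
    rw [contDiff_one_iff_hasFDerivAt]
    exact ⟨K t, hKc.comp (continuous_const.prodMk continuous_id), hKd t⟩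
  · obtain ⟨C, hC⟩ := hS.isBounded.exists_norm_le
    obtain ⟨R, hR⟩ := h3 (C + 1)
    refine ((isCompact_Icc (a := (0:ℝ)) (b := 1)).prod
      (isCompact_closedBall (0 : Euc 2) R)).of_isClosed_subset ?_ ?_
    · exact (isClosed_Icc.preimage continuous_fst).inter (hS.isClosed.preimage hHc)
    · rintro ⟨t, y⟩ ⟨ht, hy⟩
      refine ⟨ht, ?_⟩
      rw [mem_closedBall_zero_iff]
      by_contra hlt
      have a1 := hR t (eq2.symm y) (by simpa using (not_le.1 hlt).le)
      have a2 := hC _ hy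
      simp only [hH, LinearIsometryEquiv.norm_map, hKn] at a2
      linarith

lemma exist_one : ∃ f : Euc 2 → Euc 2, IsGradient f ∧ IsProper f ∧ HasDeg D f 0 := by
  set φ : ℂ → ℝ := fun z => z.re + z.re ^ 3 / 3 + z.re * z.im ^ 2 with hφ
  have hre : ContDiff ℝ 1 Complex.re := Complex.reCLM.contDiff
  have him : ContDiff ℝ 1 Complex.im := Complex.imCLM.contDiff
  have hφC : ContDiff ℝ 1 φ := by simp only [hφ]; fun_prop
  have hψC : ContDiff ℝ 1 (fun y : Euc 2 => φ (eq2.symm y)) :=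
    hφC.comp eq2.symm.toContinuousLinearEquiv.contDiff
  set f := gradient (fun y : Euc 2 => φ (eq2.symm y)) with hf
  have hfc : Continuous f := grad_cont hψC (fun _ => rfl)
  have hfn : ∀ y, 1 + ‖y‖ ^ 2 ≤ ‖f y‖ := by
    intro y
    have h1 : ‖f y‖ = ‖fderiv ℝ (fun y : Euc 2 => φ (eq2.symm y)) y‖ := by
      rw [hf]; unfold gradient; rw [LinearIsometryEquiv.norm_map]
    have h2 : HasDerivAt (fun s : ℝ => y + s • eq2 1) (eq2 1) 0 := by
      simpa using ((hasDerivAt_id (0:ℝ)).smul_const (eq2 1)).const_add y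
    have h3 : HasFDerivAt (fun y : Euc 2 => φ (eq2.symm y))
        (fderiv ℝ (fun y : Euc 2 => φ (eq2.symm y)) y) (y + (0:ℝ) • eq2 1) := by
      rw [zero_smul, add_zero]
      exact (hψC.differentiable one_ne_zero y).hasFDerivAt
    have h4 := h3.comp_hasDerivAt 0 h2
    set z := eq2.symm y with hz
    have e : (fun y : Euc 2 => φ (eq2.symm y)) ∘ (fun s : ℝ => y + s • eq2 1) = fun s : ℝ =>
        (z.re + s) + (z.re + s) ^ 3 / 3 + (z.re + s) * z.im ^ 2 := by
      ext1 s
      simp [hφ, hz]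
    rw [e] at h4
    have h5 : HasDerivAt (fun s : ℝ => (z.re + s) + (z.re + s) ^ 3 / 3 + (z.re + s) * z.im ^ 2)
        (1 + z.re ^ 2 + z.im ^ 2) 0 := by
      have a := (hasDerivAt_id (0:ℝ)).const_add z.re
      have := (a.add ((a.pow 3).div_const 3)).add (a.mul_const (z.im ^ 2))
      refine this.congr_deriv ?_
      simp
    have h6 := h4.unique h5
    have h7 : ‖y‖ ^ 2 = z.re ^ 2 + z.im ^ 2 := by
      rw [← eq2.symm.norm_map y, ← hz, ← Complex.normSq_eq_norm_sq, Complex.normSq_apply]; ring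
    have h8 := (le_abs_self _).trans
      ((fderiv ℝ (fun y : Euc 2 => φ (eq2.symm y)) y).le_opNorm (eq2 1))
    rw [h6, LinearIsometryEquiv.norm_map, norm_one, mul_one, ← h1] at h8
    linarith
  have hf0 : ∀ y, f y ≠ 0 := fun y h => by
    have := hfn y
    rw [h, norm_zero] at this
    nlinarith [norm_nonneg y]
  refine ⟨f, ⟨_, hψC, fun _ => rfl⟩, fun S hS => ?_, fun R _ _ => ?_⟩
  · obtain ⟨C, hC⟩ := hS.isBounded.exists_norm_le
    refine (isCompact_closedBall (0 : Euc 2) C).of_isClosed_subset (hS.isClosed.preimage hfc) ?_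
    intro y hy
    rw [mem_closedBall_zero_iff]
    have := hC _ hy
    nlinarith [hfn y, sq_nonneg (‖y‖ - 1)]
  · rw [← dC_conv]
    refine dC_nonvan D (eq2.symm.continuous.comp (hfc.comp eq2.continuous)) fun x => ?_
    simpa using hf0 (eq2 x)

theorem final :
    (∃ f : Euc 2 → Euc 2, IsGradient f ∧ IsProper f ∧ HasDeg D f 0) ∧
    (∀ f g : Euc 2 → Euc 2,
      IsGradient f → IsProper f → HasDeg D f 0 →
      IsGradient g → IsProper g → HasDeg D g 0 →
      ProperGradientHomotopic f g) := by
  refine ⟨exist_one D, fun f g ⟨φ, hφ, hf⟩ hfp hfd ⟨ψ, hψ, hg⟩ hgp hgd => ?_⟩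
  obtain ⟨E, hE, hEu⟩ := main_one D hφ hf hfp hfd
  obtain ⟨E', hE', hEu'⟩ := main_one D hψ hg hgp hgd
  exact hom_conv hφ hψ hf hg ((hE.trans (Hom.line hE.exr hE'.exr (fun _ => one_ne_zero) hEu hEu')).trans
    hE'.symm)

end Final
end PG

/-- the set of proper gradient homotopy classes of proper gradient maps of
Brouwer degree `0` on `ℝ²` is a singleton: such a map exists and any two proper gradient
maps of degree `0` are proper gradient homotopic. -/
theorem proper_gradient_deg_zero_singleton (D : DegreeTheory 2) :
    (∃ f : Euc 2 → Euc 2, IsGradient f ∧ IsProper f ∧ HasDeg D f 0) ∧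
    (∀ f g : Euc 2 → Euc 2,
      IsGradient f → IsProper f → HasDeg D f 0 →
      IsGradient g → IsProper g → HasDeg D g 0 →
      ProperGradientHomotopic f g) := by
  exact PG.final D
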